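/- arXiv:2111.06299 — 7 statements merged into one kernel-verified Lean document; each statement's English description precedes it below -/
import Mathlib

section
/- Let (T, {B_i}) be a tree decomposition of a finite graph G, rooted at a node r with parent map p. Suppose {B'_i} is a family of vertex sets indexed by the nodes of T with B'_r = B_r and, for every node i ≠ r, B_i ⊆ B'_i ⊆ B_i ∪ B'_{p(i)}. Then (T, {B'_i}) is also a tree decomposition of G. -/
/-!
STATEMENT 0: Let (T, {B_i}) be a tree decomposition of a finite graph G, rooted at a
node r with parent map p. Suppose {B'_i} is a family of vertex sets indexed by the
nodes of T with B'_r = B_r and, for every node i ≠ r, B_i ⊆ B'_i ⊆ B_i ∪ B'_{p(i)}.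
Then (T, {B'_i}) is also a tree decomposition of G.
-/

open SimpleGraph

/-- `(T, B)` is a tree decomposition of the graph `G`. -/
structure IsTreeDecomp {V ι : Type*} (G : SimpleGraph V) (T : SimpleGraph ι)
    (B : ι → Set V) : Prop where
  isTree : T.IsTree
  exists_bag : ∀ v : V, ∃ i, v ∈ B i
  edge_bag : ∀ ⦃u v : V⦄, G.Adj u v → ∃ i, u ∈ B i ∧ v ∈ B i
  bag_connected : ∀ (v : V) (i j : ι), v ∈ B i → v ∈ B j →
    ∀ p : T.Walk i j, p.IsPath → ∀ k ∈ p.support, v ∈ B k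

/-- `par` is the parent map of the tree `T` with respect to the root `r`:
for every node `i ≠ r`, `par i` is a neighbor of `i` lying on the path from `i`
to `r` (equivalently, `i` does not lie on the path from `par i` to `r`). -/
def IsParentMap {ι : Type*} (T : SimpleGraph ι) (r : ι) (par : ι → ι) : Prop :=
  ∀ i, i ≠ r → T.Adj i (par i) ∧
    ∀ p : T.Walk (par i) r, p.IsPath → i ∉ p.support

/-!
Fix a vertex `v`. Walking from a node `i` with `v ∈ B' i` towards the root, `v` stays in the
enlarged bags until a node `s` with `v ∈ B s` is met, at the latest at the root. Hence every node
whose enlarged bag contains `v` is joined, inside the set of such nodes, to the connected set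
`{s | v ∈ B s}`, so the larger set is connected as well.
-/

section InducedSubgraphs

variable {ι : Type*} {T : SimpleGraph ι} {S S' : Set ι}

theorem mem_of_mem_support_of_induce_preconnected (hT : T.IsAcyclic)
    (hS : (T.induce S).Preconnected) {i j : ι} (hi : i ∈ S) (hj : j ∈ S) {p : T.Walk i j}
    (hp : p.IsPath) {k : ι} (hk : k ∈ p.support) : k ∈ S := by
  obtain ⟨q, hq, hqS⟩ : ∃ q : T.Walk i j, q.IsPath ∧ ∀ k ∈ q.support, k ∈ S := by
    obtain ⟨q, hq⟩ := (hS ⟨i, hi⟩ ⟨j, hj⟩).exists_isPath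
    refine ⟨q.map (Embedding.induce S).toHom, hq.map Subtype.val_injective, ?_⟩
    intro k hk
    obtain ⟨k', -, rfl⟩ := List.mem_map.mp (q.support_map _ ▸ hk)
    exact k'.property
  have hpq : p = q := congrArg Subtype.val <|
    (hT.subsingleton_path i j).elim ⟨p, hp⟩ ⟨q, hq⟩
  exact hqS k (hpq ▸ hk)

theorem induce_preconnected_of_isPath_support_subset (hT : T.Preconnected)
    (hS : ∀ i ∈ S, ∀ j ∈ S, ∀ p : T.Walk i j, p.IsPath → ∀ k ∈ p.support, k ∈ S) :
    (T.induce S).Preconnected := by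
  rintro ⟨i, hi⟩ ⟨j, hj⟩
  obtain ⟨p, hp⟩ := (hT i j).exists_isPath
  exact (p.induce S (hS i hi j hj p hp)).reachable

theorem induce_preconnected_of_forall_reachable (hS : (T.induce S).Preconnected) (hSS' : S ⊆ S')
    (hreach : ∀ i : S', ∃ s : S, (T.induce S').Reachable i (Set.inclusion hSS' s)) :
    (T.induce S').Preconnected := by
  intro i j
  obtain ⟨s, his⟩ := hreach i
  obtain ⟨t, hjt⟩ := hreach j
  have hst : (T.induce S').Reachable (Set.inclusion hSS' s) (Set.inclusion hSS' t) :=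
    (hS s t).map (T.induceHomOfLE hSS').toHom
  exact (his.trans hst).trans hjt.symm

end InducedSubgraphs

namespace IsParentMap

variable {ι : Type*} {T : SimpleGraph ι} {r : ι} {par : ι → ι} {S S' : Set ι}

theorem parent_mem_support (hpar : IsParentMap T r par) {i : ι} (hi : i ≠ r) {p : T.Walk i r}
    (hp : p.IsPath) : par i ∈ p.support := by
  by_contra hmem
  obtain ⟨hadj, hnot⟩ := hpar i hi
  exact hnot (.cons hadj.symm p) (hp.cons hmem) (by simp)

theorem dist_parent_lt (hpar : IsParentMap T r par) {i : ι} (hi : i ≠ r)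
    (hir : T.Reachable i r) : T.dist (par i) r < T.dist i r := by
  classical
  obtain ⟨p, hp, hlen⟩ := hir.exists_path_of_dist
  have hmem : par i ∈ p.support := hpar.parent_mem_support hi hp
  calc T.dist (par i) r ≤ (p.dropUntil (par i) hmem).length := dist_le _
    _ < p.length := Walk.length_dropUntil_lt_length hmem (hpar i hi).1.ne'
    _ = T.dist i r := hlen

theorem exists_induce_reachable (hpar : IsParentMap T r par) (hT : T.Preconnected) (hSS' : S ⊆ S')
    (hstep : ∀ i ∈ S', i ∈ S ∨ i ≠ r ∧ par i ∈ S') (i : S') :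
    ∃ s : S, (T.induce S').Reachable i (Set.inclusion hSS' s) := by
  induction hd : T.dist i r using Nat.strong_induction_on generalizing i with
  | _ d ih =>
    rcases hstep i i.property with hiS | ⟨hir, hparent⟩
    · exact ⟨⟨i, hiS⟩, .rfl⟩
    · have hlt : T.dist (par i) r < d := hd ▸ hpar.dist_parent_lt hir (hT i r)
      obtain ⟨s, hs⟩ := ih _ hlt ⟨par i, hparent⟩ rfl
      have hadj : (T.induce S').Adj i ⟨par i, hparent⟩ := (hpar i hir).1
      exact ⟨s, hadj.reachable.trans hs⟩

end IsParentMap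

namespace IsTreeDecomp

variable {V ι : Type*} {G : SimpleGraph V} {T : SimpleGraph ι} {B B' : ι → Set V}

theorem induce_preconnected (hTD : IsTreeDecomp G T B) (v : V) :
    (T.induce {i | v ∈ B i}).Preconnected :=
  induce_preconnected_of_isPath_support_subset hTD.isTree.connected.preconnected
    fun i hi j hj => hTD.bag_connected v i j hi hj

theorem of_bag_subset (hTD : IsTreeDecomp G T B) (hle : ∀ i, B i ⊆ B' i)
    (hconn : ∀ v, (T.induce {i | v ∈ B' i}).Preconnected) : IsTreeDecomp G T B' where
  isTree := hTD.isTree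
  exists_bag v := (hTD.exists_bag v).imp fun i hv => hle i hv
  edge_bag _ _ huv := (hTD.edge_bag huv).imp fun i => And.imp (@hle i _) (@hle i _)
  bag_connected v _ _ hi hj _ hp _ hk :=
    mem_of_mem_support_of_induce_preconnected hTD.isTree.isAcyclic (hconn v) hi hj hp hk

end IsTreeDecomp

theorem stmt0_general {V ι : Type*}
    (G : SimpleGraph V) (T : SimpleGraph ι) (B B' : ι → Set V)
    (r : ι) (par : ι → ι) (hpar : IsParentMap T r par)
    (hTD : IsTreeDecomp G T B)
    (hroot : B' r = B r)
    (hsub : ∀ i, i ≠ r → B i ⊆ B' i ∧ B' i ⊆ B i ∪ B' (par i)) :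
    IsTreeDecomp G T B' := by
  have hle (i : ι) : B i ⊆ B' i := by
    rcases eq_or_ne i r with rfl | hi
    · exact hroot.ge
    · exact (hsub i hi).1
  have hstep (v : V) (i : ι) (hv : v ∈ B' i) : v ∈ B i ∨ i ≠ r ∧ v ∈ B' (par i) := by
    rcases eq_or_ne i r with rfl | hi
    · exact .inl (hroot ▸ hv)
    · exact ((hsub i hi).2 hv).imp_right (.intro hi)
  refine hTD.of_bag_subset hle fun v => ?_
  exact induce_preconnected_of_forall_reachable (hTD.induce_preconnected v) (fun i => @hle i v)
    (hpar.exists_induce_reachable hTD.isTree.connected.preconnected _ (hstep v))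

theorem stmt0 {V ι : Type*} [Fintype V] [Fintype ι]
    (G : SimpleGraph V) (T : SimpleGraph ι) (B B' : ι → Set V)
    (r : ι) (par : ι → ι) (hpar : IsParentMap T r par)
    (hTD : IsTreeDecomp G T B)
    (hroot : B' r = B r)
    (hsub : ∀ i, i ≠ r → B i ⊆ B' i ∧ B' i ⊆ B i ∪ B' (par i)) :
    IsTreeDecomp G T B' :=
  stmt0_general G T B B' r par hpar hTD hroot hsub
end

section
/- Let (T, B) be a tree decomposition, let s, t be nodes of T, and let x be a node lying on the path T_{s↔t}. If T_{s↔x} has combinatorial length at most a and T_{x↔t} has combinatorial length at most b, then T_{s↔t} has combinatorial length at most a + b. -/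
/-!
STATEMENT 1: Let (T, B) be a tree decomposition, let s, t be nodes of T, and let x be
a node lying on the path T_{s↔t}. If T_{s↔x} has combinatorial length at most a and
T_{x↔t} has combinatorial length at most b, then T_{s↔t} has combinatorial length at
most a + b.
-/

open SimpleGraph

/-- One simplification step: delete a redundant internal node `x` (with neighbors
`u` and `w`, in some labeling of the two neighbors, satisfying `B x ∩ B w ⊆ B u`)
from the list of nodes of a path, joining its two former neighbors. -/
def SimpStep {V ι : Type*} (B : ι → Set V) (l l' : List ι) : Prop :=
  ∃ (l₁ l₂ : List ι) (u x w : ι),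
    l = l₁ ++ u :: x :: w :: l₂ ∧ l' = l₁ ++ u :: w :: l₂ ∧
      (B x ∩ B w ⊆ B u ∨ B x ∩ B u ⊆ B w)

/-- The path `T_{s↔t}` has combinatorial length at most `n`: some simplification of
the (unique) path from `s` to `t` has at most `n` edges (i.e. at most `n + 1` nodes). -/
def CombLenLE {V ι : Type*} (T : SimpleGraph ι) (B : ι → Set V) (s t : ι) (n : ℕ) : Prop :=
  ∀ p : T.Walk s t, p.IsPath →
    ∃ l : List ι, Relation.ReflTransGen (SimpStep B) p.support l ∧ l.length ≤ n + 1

/-- `Simplifies B l l'`: the node list `l'` is a simplification of `l`, that is, it arises from `l`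
by repeatedly deleting redundant internal nodes. Reducible, so that it is interchangeable with the
relation occurring in `CombLenLE`. -/
abbrev Simplifies {V ι : Type*} (B : ι → Set V) : List ι → List ι → Prop :=
  Relation.ReflTransGen (SimpStep B)

section

variable {V ι : Type*} {B : ι → Set V} {l l' : List ι}

namespace SimpStep

theorem append_right (h : SimpStep B l l') (r : List ι) : SimpStep B (l ++ r) (l' ++ r) := by
  obtain ⟨l₁, l₂, u, x, w, rfl, rfl, hredundant⟩ := h
  exact ⟨l₁, l₂ ++ r, u, x, w, by simp, by simp, hredundant⟩

theorem append_left (h : SimpStep B l l') (r : List ι) : SimpStep B (r ++ l) (r ++ l') := by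
  obtain ⟨l₁, l₂, u, x, w, rfl, rfl, hredundant⟩ := h
  exact ⟨r ++ l₁, l₂, u, x, w, by simp, by simp, hredundant⟩

theorem getLast?_eq (h : SimpStep B l l') : l.getLast? = l'.getLast? := by
  obtain ⟨l₁, l₂, u, x, w, rfl, rfl, -⟩ := h
  simp [List.getLast?_cons]

end SimpStep

namespace Simplifies

theorem append_right (h : Simplifies B l l') (r : List ι) : Simplifies B (l ++ r) (l' ++ r) :=
  h.lift (· ++ r) fun _ _ step => step.append_right r

theorem append_left (h : Simplifies B l l') (r : List ι) : Simplifies B (r ++ l) (r ++ l') :=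
  h.lift (r ++ ·) fun _ _ step => step.append_left r

theorem getLast?_eq (h : Simplifies B l l') : l.getLast? = l'.getLast? := by
  induction h with
  | refl => rfl
  | tail _ step ih => exact ih.trans step.getLast?_eq

theorem exists_eq_concat {x : ι} (h : Simplifies B (l ++ [x]) l') : ∃ d, l' = d ++ [x] :=
  List.getLast?_eq_some_iff.mp (h.getLast?_eq.symm.trans List.getLast?_concat)

/-- Simplification never deletes the shared node `x`, so the two halves can be simplified one after
the other and still overlap exactly in `x`. -/
theorem exists_glue {r r' : List ι} {x : ι}
    (hl : Simplifies B (l ++ [x]) l') (hr : Simplifies B (x :: r) r') :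
    ∃ m, Simplifies B (l ++ x :: r) m ∧ m.length + 1 = l'.length + r'.length := by
  obtain ⟨d, rfl⟩ := hl.exists_eq_concat
  have hleft : Simplifies B (l ++ x :: r) (d ++ x :: r) := by
    simpa only [List.append_assoc, List.singleton_append] using hl.append_right r
  refine ⟨d ++ r', hleft.trans (hr.append_left d), ?_⟩
  simp only [List.length_append, List.length_singleton]
  omega

theorem exists_support_append {T : SimpleGraph ι} {s x t : ι} {p : T.Walk s x} {q : T.Walk x t}
    {r' : List ι} (hp : Simplifies B p.support l') (hq : Simplifies B q.support r') :
    ∃ m, Simplifies B (p.append q).support m ∧ m.length + 1 = l'.length + r'.length := by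
  rw [← p.dropLast_support_concat] at hp
  rw [← q.cons_tail_support] at hq
  rw [Walk.support_append_eq_support_dropLast_append, ← q.cons_tail_support]
  exact hp.exists_glue hq

end Simplifies

end

theorem stmt1_general {V ι : Type*} {T : SimpleGraph ι} {B : ι → Set V} {s t x : ι}
    (hx : ∀ p : T.Walk s t, p.IsPath → x ∈ p.support) {a b : ℕ}
    (ha : CombLenLE T B s x a) (hb : CombLenLE T B x t b) :
    CombLenLE T B s t (a + b) := by
  classical
  intro p hp
  have hxp := hx p hp
  obtain ⟨l, hl, hla⟩ := ha (p.takeUntil x hxp) (hp.takeUntil hxp)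
  obtain ⟨r, hr, hrb⟩ := hb (p.dropUntil x hxp) (hp.dropUntil hxp)
  obtain ⟨m, hm, hmlen⟩ := Simplifies.exists_support_append hl hr
  rw [p.take_spec hxp] at hm
  exact ⟨m, hm, by omega⟩

theorem stmt1 {V ι : Type*} [Fintype V] [Fintype ι]
    (G : SimpleGraph V) (T : SimpleGraph ι) (B : ι → Set V)
    (hTD : IsTreeDecomp G T B)
    (s t x : ι)
    (hx : ∀ p : T.Walk s t, p.IsPath → x ∈ p.support)
    (a b : ℕ)
    (ha : CombLenLE T B s x a) (hb : CombLenLE T B x t b) :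
    CombLenLE T B s t (a + b) :=
  stmt1_general hx ha hb
end

section
/- Let (T, B) be a tree decomposition of a graph G, rooted at r, of depth d, with maximum bag size m = max_w |B_w|, and let λ be an integer with 1 ≤ λ ≤ d. Then the bridge decomposition (T, B') is a tree decomposition of G, and every bag satisfies |B'_v| ≤ (λ + 1) · m. -/
/-!
STATEMENT 2: Let (T, B) be a tree decomposition of a graph G, rooted at r, of depth d,
with maximum bag size m = max_w |B_w|, and let λ be an integer with 1 ≤ λ ≤ d. Then
the bridge decomposition (T, B') is a tree decomposition of G, and every bag satisfies
|B'_v| ≤ (λ + 1) · m.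
-/

open SimpleGraph

/-!
Walk from a node `v` towards the root: `B'_v` is `B_v` together with the parent's original bag if
the parent is a synchronization node, and with the parent's bridge bag otherwise. Everything follows
by induction along the path to the root. If `x ∈ B'_v`, climbing until `x` is met in an original bag
stays inside the bridge bags containing `x`; so the nodes whose bridge bag contains `x` form the old
subtree of `x` with branches attached to it. Climbing `k` levels collects at most `k + 1` bags, and
a synchronization node is met after at most `λ` levels.
-/

theorem support_subset_of_isAcyclic_of_isPath {ι : Type*} {T : SimpleGraph ι} (hT : T.IsAcyclic)
    {i j : ι} {p : T.Walk i j} (hp : p.IsPath) (q : T.Walk i j) : p.support ⊆ q.support := by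
  classical
  have hpq : p = q.bypass :=
    congrArg Subtype.val ((hT.subsingleton_path i j).elim ⟨p, hp⟩ ⟨q.bypass, q.bypass_isPath⟩)
  exact hpq ▸ q.support_bypass_subset_support

theorem IsTreeDecomp.of_subset_of_exists_walk {V ι : Type*} {G : SimpleGraph V}
    {T : SimpleGraph ι} {B B' : ι → Set V} (hTD : IsTreeDecomp G T B) (hsub : ∀ i, B i ⊆ B' i)
    (hwalk : ∀ x i, x ∈ B' i → ∃ w, x ∈ B w ∧ ∃ q : T.Walk i w, ∀ k ∈ q.support, x ∈ B' k) :
    IsTreeDecomp G T B' where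
  isTree := hTD.isTree
  exists_bag x := (hTD.exists_bag x).imp fun i hx => hsub i hx
  edge_bag _ _ hxy := (hTD.edge_bag hxy).imp fun i h => ⟨hsub i h.1, hsub i h.2⟩
  bag_connected x i j hi hj p hp k hk := by
    obtain ⟨a, hxa, p_ia, h_ia⟩ := hwalk x i hi
    obtain ⟨b, hxb, p_jb, h_jb⟩ := hwalk x j hj
    obtain ⟨p_ab, hp_ab⟩ := hTD.isTree.connected.exists_isPath a b
    have hk' := support_subset_of_isAcyclic_of_isPath hTD.isTree.isAcyclic hp
      ((p_ia.append p_ab).append p_jb.reverse) hk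
    simp only [Walk.mem_support_append_iff, Walk.support_reverse, List.mem_reverse] at hk'
    rcases hk' with (hk' | hk') | hk'
    · exact h_ia k hk'
    · exact hsub k (hTD.bag_connected x a b hxa hxb p_ab hp_ab k hk')
    · exact h_jb k hk'

section BridgeBag

variable {V ι : Type*} {T : SimpleGraph ι} {v r : ι}

open Classical in
/-- The bag of the bridge decomposition at the start of a walk (in practice, the path to the root):
the union of the bags met up to and including the first node of `S` after the start, or up to the
end of the walk if there is no such node. The set `S` of synchronization nodes is arbitrary. -/
noncomputable def bridgeBag (B : ι → Set V) (S : Set ι) : {v r : ι} → T.Walk v r → Set V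
  | v, _, .nil => B v
  | v, _, .cons (v := u) _ p => B v ∪ if u ∈ S then B u else bridgeBag B S p

variable {B B' : ι → Set V} {S : Set ι}

theorem bridgeBag_cons_of_mem {u : ι} (hadj : T.Adj v u) (p : T.Walk u r) (hu : u ∈ S) :
    bridgeBag B S (.cons hadj p) = B v ∪ B u := by
  simp [bridgeBag, hu]

theorem bridgeBag_cons_of_notMem {u : ι} (hadj : T.Adj v u) (p : T.Walk u r) (hu : u ∉ S) :
    bridgeBag B S (.cons hadj p) = B v ∪ bridgeBag B S p := by
  simp [bridgeBag, hu]

theorem subset_bridgeBag (p : T.Walk v r) : B v ⊆ bridgeBag B S p := by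
  cases p with
  | nil => exact subset_rfl
  | cons => exact Set.subset_union_left

theorem exists_isPath_bridgeBag_eq_iUnion {p : T.Walk v r} (hp : p.IsPath) {s : ι}
    {l₁ l₂ : List ι} (hsupp : p.support = v :: (l₁ ++ s :: l₂)) (hs : s ∈ S)
    (hl₁ : ∀ w ∈ l₁, w ∉ S) :
    ∃ q : T.Walk v s, q.IsPath ∧ q.support ⊆ p.support ∧
      bridgeBag B S p = ⋃ w ∈ q.support, B w := by
  induction p generalizing l₁ with
  | nil => simp at hsupp
  | @cons v u r hadj p ih =>
    obtain ⟨hp_tail, hv⟩ := (Walk.cons_isPath_iff hadj p).1 hp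
    have hsupp_tail : u :: p.support.tail = l₁ ++ s :: l₂ := by simpa using hsupp
    cases l₁ with
    | nil =>
      obtain rfl : u = s := (List.cons.inj hsupp_tail).1
      refine ⟨hadj.toWalk, .of_adj hadj, by simp, ?_⟩
      simp [bridgeBag_cons_of_mem _ _ hs, Set.iUnion_or, Set.iUnion_union_distrib]
    | cons a l₁ =>
      obtain ⟨rfl, htail⟩ : u = a ∧ p.support.tail = l₁ ++ s :: l₂ := List.cons.inj hsupp_tail
      have hu : u ∉ S := hl₁ u List.mem_cons_self
      obtain ⟨q, hq, hqp, hbag⟩ := ih hp_tail (by rw [← htail, p.cons_tail_support])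
        fun w hw => hl₁ w (List.mem_cons_of_mem u hw)
      refine ⟨.cons hadj q, hq.cons fun hvq => hv (hqp hvq), List.cons_subset_cons v hqp, ?_⟩
      simp [bridgeBag_cons_of_notMem _ _ hu, hbag, Set.iUnion_or, Set.iUnion_union_distrib]

theorem exists_walk_of_mem_bridgeBag
    (hB' : ∀ u (p : T.Walk u r), p.IsPath → B' u = bridgeBag B S p)
    {p : T.Walk v r} (hp : p.IsPath) {x : V} (hx : x ∈ bridgeBag B S p) :
    ∃ w, x ∈ B w ∧ ∃ q : T.Walk v w, ∀ k ∈ q.support, x ∈ B' k := by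
  induction p with
  | nil => exact ⟨_, hx, .nil, by simpa [hB' _ _ hp] using hx⟩
  | @cons v u r hadj p ih =>
    have hxv : x ∈ B' v := hB' v _ hp ▸ hx
    have hextend {w} (q : T.Walk u w) (hq : ∀ k ∈ q.support, x ∈ B' k) :
        ∀ k ∈ (Walk.cons hadj q).support, x ∈ B' k := by simpa [hxv] using hq
    by_cases hu : u ∈ S
    · rcases bridgeBag_cons_of_mem hadj p hu ▸ hx with hx | hx
      · exact ⟨v, hx, .nil, by simpa using hxv⟩
      · have hxu : x ∈ B' u := hB' u p hp.of_cons ▸ subset_bridgeBag p hx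
        exact ⟨u, hx, .cons hadj .nil, hextend .nil (by simpa using hxu)⟩
    · rcases bridgeBag_cons_of_notMem hadj p hu ▸ hx with hx | hx
      · exact ⟨v, hx, .nil, by simpa using hxv⟩
      · obtain ⟨w, hxw, q, hq⟩ := ih hB' hp.of_cons hx
        exact ⟨w, hxw, .cons hadj q, hextend q hq⟩

theorem IsTreeDecomp.of_eq_bridgeBag {G : SimpleGraph V} (hTD : IsTreeDecomp G T B)
    (hB' : ∀ u (p : T.Walk u r), p.IsPath → B' u = bridgeBag B S p) : IsTreeDecomp G T B' := by
  choose p hp using fun v => hTD.isTree.connected.exists_isPath v r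
  refine hTD.of_subset_of_exists_walk (fun v => ?_) fun x v hx => ?_
  · exact hB' v (p v) (hp v) ▸ subset_bridgeBag (p v)
  · exact exists_walk_of_mem_bridgeBag hB' (hp v) (hB' v (p v) (hp v) ▸ hx)

theorem encard_bridgeBag_le_of_length_eq {m : ℕ∞} (hm : ∀ w, (B w).encard ≤ m) {n : ℕ}
    (hS : ∀ u (q : T.Walk u r), q.IsPath → q.length = n → u ∈ S) {p : T.Walk v r}
    (hp : p.IsPath) {k : ℕ} (hlen : p.length = n + k + 1) :
    (bridgeBag B S p).encard ≤ (k + 2) * m := by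
  induction p generalizing k with
  | nil => simp at hlen
  | @cons v u r hadj p ih =>
    have hlen_tail : p.length = n + k := by simpa using hlen
    by_cases hu : u ∈ S
    · calc (bridgeBag B S (.cons hadj p)).encard
          ≤ m + m := bridgeBag_cons_of_mem hadj p hu ▸
            (Set.encard_union_le _ _).trans (add_le_add (hm v) (hm u))
        _ = 2 * m := (two_mul m).symm
        _ ≤ (k + 2) * m := by gcongr; exact le_add_self
    · cases k with
      | zero => exact absurd (hS u p hp.of_cons hlen_tail) hu
      | succ k =>
        calc (bridgeBag B S (.cons hadj p)).encard
            ≤ m + (k + 2) * m := bridgeBag_cons_of_notMem hadj p hu ▸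
              (Set.encard_union_le _ _).trans (add_le_add (hm v) (ih hS hp.of_cons hlen_tail))
          _ = ((k + 1 : ℕ) + 2) * m := by push_cast; ring

theorem encard_bridgeBag_le {m : ℕ∞} (hm : ∀ w, (B w).encard ≤ m) {lam : ℕ} (hlam : 1 ≤ lam)
    (hS : ∀ u (q : T.Walk u r), q.IsPath → lam ∣ q.length → u ∈ S) {p : T.Walk v r}
    (hp : p.IsPath) : (bridgeBag B S p).encard ≤ (lam + 1) * m := by
  cases p with
  | nil => exact (hm v).trans (le_mul_of_one_le_left' le_add_self)
  | cons hadj p =>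
    have hmod : p.length % lam + 2 ≤ lam + 1 := Nat.succ_le_succ (Nat.mod_lt p.length hlam)
    calc (bridgeBag B S (Walk.cons hadj p)).encard
        ≤ ((p.length % lam : ℕ) + 2) * m :=
          encard_bridgeBag_le_of_length_eq hm (n := lam * (p.length / lam))
            (fun u q hq hlen => hS u q hq ⟨_, hlen⟩) hp
            (by rw [Walk.length_cons, Nat.div_add_mod])
      _ ≤ (lam + 1) * m := mul_le_mul_left (by exact_mod_cast hmod) m

end BridgeBag

theorem stmt2_general {V ι : Type*} (G : SimpleGraph V) (T : SimpleGraph ι) (B : ι → Set V)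
    (hTD : IsTreeDecomp G T B) (r : ι) (lvl : ι → ℕ)
    (hlvl : ∀ (v : ι) (p : T.Walk v r), p.IsPath → p.length = lvl v)
    (m : ℕ∞) (hm : ∀ w, (B w).encard ≤ m) (lam : ℕ) (hlam : 1 ≤ lam) (syn : ι → ι)
    (hsyn : ∀ v, v ≠ r → ∀ p : T.Walk v r, p.IsPath →
      ∃ l₁ l₂ : List ι, p.support = v :: (l₁ ++ syn v :: l₂) ∧
        lam ∣ lvl (syn v) ∧ ∀ w ∈ l₁, ¬ lam ∣ lvl w)
    (B' : ι → Set V) (hB'r : B' r = B r)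
    (hB' : ∀ v, v ≠ r → ∀ p : T.Walk v (syn v), p.IsPath → B' v = ⋃ w ∈ p.support, B w) :
    IsTreeDecomp G T B' ∧ ∀ v, (B' v).encard ≤ (lam + 1) * m := by
  have hbag : ∀ v (p : T.Walk v r), p.IsPath → B' v = bridgeBag B {w | lam ∣ lvl w} p := by
    intro v p hp
    by_cases hv : v = r
    · subst hv
      rw [(Walk.isPath_iff_nil.1 hp).eq_nil, hB'r, bridgeBag]
    · obtain ⟨l₁, l₂, hsupp, hs, hl₁⟩ := hsyn v hv p hp
      obtain ⟨q, hq, -, hbridge⟩ := exists_isPath_bridgeBag_eq_iUnion (B := B)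
        (S := {w | lam ∣ lvl w}) hp hsupp hs hl₁
      rw [hB' v hv q hq, hbridge]
  refine ⟨hTD.of_eq_bridgeBag hbag, fun v => ?_⟩
  obtain ⟨p, hp⟩ := hTD.isTree.connected.exists_isPath v r
  rw [hbag v p hp]
  exact encard_bridgeBag_le hm hlam
    (fun u q hq => (hlvl u q hq).subst (motive := (lam ∣ ·))) hp

theorem stmt2 {V ι : Type*} [Fintype V] [Fintype ι]
    (G : SimpleGraph V) (T : SimpleGraph ι) (B : ι → Set V)
    (hTD : IsTreeDecomp G T B)
    (r : ι)
    -- the level of a node: the number of edges on the (unique) path to the root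
    (lvl : ι → ℕ)
    (hlvl : ∀ (v : ι) (p : T.Walk v r), p.IsPath → p.length = lvl v)
    -- the depth of the rooted decomposition
    (d : ℕ) (hd : ∀ v, lvl v ≤ d) (hde : ∃ v, lvl v = d)
    -- the maximum bag size
    (m : ℕ) (hm : m = Finset.univ.sup fun w => (B w).ncard)
    (lam : ℕ) (hlam1 : 1 ≤ lam) (hlamd : lam ≤ d)
    -- `syn v` is the synchronization ancestor of `v ≠ r`: the first node after `v`
    -- on the path from `v` to `r` whose level is divisible by `lam`
    (syn : ι → ι)
    (hsyn : ∀ v, v ≠ r → ∀ p : T.Walk v r, p.IsPath →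
      ∃ l₁ l₂ : List ι, p.support = v :: (l₁ ++ syn v :: l₂) ∧
        lam ∣ lvl (syn v) ∧ ∀ w ∈ l₁, ¬ lam ∣ lvl w)
    -- the bridge decomposition
    (B' : ι → Set V)
    (hB'r : B' r = B r)
    (hB' : ∀ v, v ≠ r → ∀ p : T.Walk v (syn v), p.IsPath →
      B' v = ⋃ w ∈ p.support, B w) :
    IsTreeDecomp G T B' ∧ ∀ v, (B' v).ncard ≤ (lam + 1) * m := by
  have hbags w : (B w).encard ≤ m := Set.encard_le_coe_iff_finite_ncard_le.2
    ⟨Set.toFinite _, hm ▸ Finset.le_sup (f := fun w => (B w).ncard) (Finset.mem_univ w)⟩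
  exact (stmt2_general G T B hTD r lvl hlvl m hbags lam hlam1 syn hsyn B' hB'r hB').imp_right
    fun hcard v => by exact_mod_cast (Set.ncard_le_encard _).trans (hcard v)
end

section
/- Let (T, B) be a tree decomposition of a graph G, rooted at r, of depth d, and let λ be an integer with 1 ≤ λ ≤ d. Then the bridge decomposition (T, B') has combinatorial diameter at most 2⌊d/λ⌋ + 4. -/
/-!
STATEMENT 3: Let (T, B) be a tree decomposition of a graph G, rooted at r, of depth d,
and let λ be an integer with 1 ≤ λ ≤ d. Then the bridge decomposition (T, B') has
combinatorial diameter at most 2⌊d/λ⌋ + 4.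
-/

open SimpleGraph

/-- `(T, B)` has combinatorial diameter at most `n`. -/
def CombDiamLE {V ι : Type*} (T : SimpleGraph ι) (B : ι → Set V) (n : ℕ) : Prop :=
  ∀ s t : ι, CombLenLE T B s t n

/-!
If the parent `w` of a node `v` is not a synchronization node, then `v` and `w` have the same
synchronization ancestor, so `B' w ⊆ B' v`. Hence, on a path climbing towards the root, every
internal node which is not a synchronization node is redundant and can be deleted. A path of `T`
climbs to an apex and then descends; each of the two branches retains its end node and at most
`d / lam + 1` synchronization nodes, which together with the apex leaves at most
`2 * (d / lam + 2) + 1` nodes.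
-/

section Simplification

variable {V ι : Type*} {B : ι → Set V} {l l' : List ι}

theorem SimpStep.cons (a : ι) (h : SimpStep B l l') : SimpStep B (a :: l) (a :: l') := by
  obtain ⟨l₁, l₂, u, x, w, rfl, rfl, h⟩ := h
  exact ⟨a :: l₁, l₂, u, x, w, rfl, rfl, h⟩

theorem SimpStep.reverse (h : SimpStep B l l') : SimpStep B l.reverse l'.reverse := by
  obtain ⟨l₁, l₂, u, x, w, rfl, rfl, h⟩ := h
  exact ⟨l₂.reverse, l₁.reverse, w, x, u, by simp, by simp, h.symm⟩

theorem reflTransGen_simpStep_cons (a : ι) (h : Relation.ReflTransGen (SimpStep B) l l') :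
    Relation.ReflTransGen (SimpStep B) (a :: l) (a :: l') :=
  h.lift (List.cons a) fun _ _ hstep => hstep.cons a

theorem reflTransGen_simpStep_reverse (h : Relation.ReflTransGen (SimpStep B) l l') :
    Relation.ReflTransGen (SimpStep B) l.reverse l'.reverse :=
  h.lift List.reverse fun _ _ hstep => hstep.reverse

theorem simpStep_of_bag_subset {x v : ι} (h : B v ⊆ B x) (hl : l ≠ []) :
    SimpStep B (x :: v :: l) (x :: l) := by
  obtain ⟨w, m, rfl⟩ := List.exists_cons_of_ne_nil hl
  exact ⟨[], m, x, v, w, rfl, rfl, Or.inl (Set.inter_subset_left.trans h)⟩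

theorem reflTransGen_simpStep_filter {P : ι → Prop} [DecidablePred P] {x : ι}
    (hl : (x :: l).IsChain fun v w => ¬ P w → B w ⊆ B v) {m : List ι} (hm : m ≠ []) :
    Relation.ReflTransGen (SimpStep B) (x :: l ++ m) (x :: l.filter P ++ m) := by
  induction l generalizing x with
  | nil => exact .refl
  | cons v l ih =>
    obtain ⟨hxv, hvl⟩ := List.isChain_cons_cons.1 hl
    by_cases hv : P v
    · simpa [hv] using reflTransGen_simpStep_cons x (ih hvl)
    · have hxl : (x :: l).IsChain fun v w => ¬ P w → B w ⊆ B v :=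
        hvl.imp_head fun hvw hw => (hvw hw).trans (hxv hv)
      rw [List.filter_cons_of_neg (by simpa using hv)]
      exact .head (simpStep_of_bag_subset (hxv hv) (by simp [hm])) (ih hxl)

theorem exists_simplification_length_le {P : ι → Prop} [DecidablePred P] {k : ℕ}
    (hl : l.IsChain fun v w => ¬ P w → B w ⊆ B v) (hk : (l.filter P).length ≤ k) :
    ∃ l' : List ι, l'.length ≤ k + 1 ∧
      ∀ m ≠ [], Relation.ReflTransGen (SimpStep B) (l ++ m) (l' ++ m) := by
  cases l with
  | nil => exact ⟨[], by simp, fun _ _ => .refl⟩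
  | cons x l =>
    have hlength : (l.filter P).length ≤ k :=
      ((List.sublist_cons_self x l).filter _).length_le.trans hk
    exact ⟨x :: l.filter P, by simpa using hlength,
      fun _ hm => reflTransGen_simpStep_filter hl hm⟩

end Simplification

theorem exists_ascent_descent_of_isChain {ι : Type*} {R : ι → ι → Prop}
    (hR : Relator.RightUnique R) {l : List ι} (hne : l ≠ []) (hnodup : l.Nodup)
    (hl : l.IsChain fun v w => R v w ∨ R w v) :
    ∃ up apex down, l = up ++ apex :: down ∧
      (up ++ [apex]).IsChain R ∧ (apex :: down).IsChain (flip R) := by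
  induction l with
  | nil => exact absurd rfl hne
  | cons s l ih =>
    cases l with
    | nil => exact ⟨[], s, [], rfl, .singleton s, .singleton s⟩
    | cons v l =>
      obtain ⟨hsv, hvl⟩ := List.isChain_cons_cons.1 hl
      obtain ⟨up, apex, down, heq, hup, hdown⟩ := ih (by simp) hnodup.of_cons hvl
      rcases hsv with hsv | hvs
      · refine ⟨s :: up, apex, down, by rw [heq, List.cons_append], ?_, hdown⟩
        cases up <;> simp_all
      · cases up with
        | nil =>
          obtain ⟨rfl, rfl⟩ := List.cons.inj heq
          exact ⟨[], s, v :: l, rfl, .singleton s, hdown.cons_cons hvs⟩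
        | cons u up =>
          -- The node after `v` would be `s` again, by right-uniqueness of `R`.
          exfalso
          cases up <;> grind [Relator.RightUnique]

theorem card_le_div_add_one_of_forall_dvd {lam d : ℕ} (hlam : 0 < lam) {s : Finset ℕ}
    (hs : ∀ n ∈ s, lam ∣ n ∧ n ≤ d) : s.card ≤ d / lam + 1 := by
  have hsub : s ⊆ (Finset.range (d / lam + 1)).image (lam * ·) := by
    intro n hn
    obtain ⟨⟨k, rfl⟩, hk⟩ := hs n hn
    have hkd : k ≤ d / lam := (Nat.le_div_iff_mul_le hlam).2 (by rwa [mul_comm])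
    exact Finset.mem_image_of_mem _ (Finset.mem_range_succ_iff.2 hkd)
  simpa using (Finset.card_le_card hsub).trans Finset.card_image_le

section RootedTree

variable {ι : Type*} {T : SimpleGraph ι} {r v w : ι}

theorem length_eq_dist_of_isTree (hT : T.IsTree) {p : T.Walk v w} (hp : p.IsPath) :
    p.length = T.dist v w := by
  obtain ⟨q, hq, hlength⟩ := hT.connected.exists_path_of_dist v w
  rw [(hT.existsUnique_path v w).unique hp hq, hlength]

theorem ne_root_of_not_dvd_dist {lam : ℕ} (h : ¬ lam ∣ T.dist w r) : w ≠ r := by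
  rintro rfl
  simp at h

theorem dist_eq_of_forall_isPath_length (hT : T.Connected) {lvl : ι → ℕ}
    (hlvl : ∀ (v : ι) (p : T.Walk v r), p.IsPath → p.length = lvl v) : (T.dist · r) = lvl := by
  funext v
  obtain ⟨p, hp, hlength⟩ := hT.exists_path_of_dist v r
  exact hlength.symm.trans (hlvl v p hp)

/-- In the tree `T` rooted at `r`, the node `w` is the parent of `v`. The level of a node is its
distance to `r`. -/
def IsParent (T : SimpleGraph ι) (r v w : ι) : Prop :=
  T.Adj v w ∧ T.dist v r = T.dist w r + 1

theorem IsParent.ne_root (h : IsParent T r v w) : v ≠ r := by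
  rintro rfl
  simpa using h.2

theorem isParent_or_isParent_of_adj (hT : T.IsTree) (h : T.Adj v w) :
    IsParent T r v w ∨ IsParent T r w v := by
  simp only [IsParent, h, h.symm, true_and, T.dist_comm (v := r)]
  exact hT.dist_eq_dist_add_one_of_adj r h

theorem IsParent.isPath_cons (h : IsParent T r v w) (hT : T.IsTree) {p : T.Walk w r}
    (hp : p.IsPath) : (Walk.cons h.1 p).IsPath :=
  Walk.isPath_of_length_eq_dist _ <| by
    rw [Walk.length_cons, length_eq_dist_of_isTree hT hp, h.2]

theorem isParent_rightUnique (hT : T.IsTree) : Relator.RightUnique (IsParent T r) := by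
  intro v w w' h h'
  obtain ⟨p, hp, -⟩ := hT.existsUnique_path w r
  obtain ⟨p', hp', -⟩ := hT.existsUnique_path w' r
  have hcons : Walk.cons h.1 p = Walk.cons h'.1 p' :=
    (hT.existsUnique_path v r).unique (h.isPath_cons hT hp) (h'.isPath_cons hT hp')
  simpa using congrArg Walk.snd hcons

theorem exists_ascent_descent_of_isPath (hT : T.IsTree) (r : ι) {p : T.Walk v w}
    (hp : p.IsPath) :
    ∃ up apex down, p.support = up ++ apex :: down ∧
      (up ++ [apex]).IsChain (IsParent T r) ∧ (apex :: down).IsChain (flip (IsParent T r)) :=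
  exists_ascent_descent_of_isChain (isParent_rightUnique hT) p.support_ne_nil hp.support_nodup
    (p.isChain_adj_support.imp fun _ _ => isParent_or_isParent_of_adj hT)

theorem nodup_map_dist_of_isChain_isParent {l : List ι} (hl : l.IsChain (IsParent T r)) :
    (l.map (T.dist · r)).Nodup := by
  have hdecreasing : (l.map (T.dist · r)).IsChain (· > ·) :=
    List.isChain_map_of_isChain _ (fun _ _ h => by have := h.2; omega) hl
  exact hdecreasing.pairwise.imp ne_of_gt

theorem length_filter_dvd_dist_le {d lam : ℕ} (hlam : 0 < lam) (hd : ∀ v, T.dist v r ≤ d)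
    {l : List ι} (hl : l.IsChain (IsParent T r)) :
    (l.filter (lam ∣ T.dist · r)).length ≤ d / lam + 1 := by
  have hnodup : ((l.filter (lam ∣ T.dist · r)).map (T.dist · r)).Nodup :=
    (nodup_map_dist_of_isChain_isParent hl).sublist (List.filter_sublist.map _)
  rw [← List.length_map (T.dist · r), ← List.toFinset_card_of_nodup hnodup]
  refine card_le_div_add_one_of_forall_dvd hlam fun n hn => ?_
  obtain ⟨v, hv, rfl⟩ := List.mem_map.1 (List.mem_toFinset.1 hn)
  exact ⟨by simpa using (List.mem_filter.1 hv).2, hd v⟩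

theorem combDiamLE_of_isParent_bag_subset {V : Type*} {B : ι → Set V} {P : ι → Prop}
    [DecidablePred P] {k : ℕ} (hT : T.IsTree)
    (hB : ∀ v w, IsParent T r v w → ¬ P w → B w ⊆ B v)
    (hk : ∀ l : List ι, l.IsChain (IsParent T r) → (l.filter P).length ≤ k) :
    CombDiamLE T B (2 * k + 2) := by
  have simplify_branch (l : List ι) (hl : l.IsChain (IsParent T r)) :=
    exists_simplification_length_le (hl.imp hB) (hk l hl)
  intro s t p hp
  obtain ⟨up, apex, down, hsupport, hup, hdown⟩ := exists_ascent_descent_of_isPath hT r hp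
  obtain ⟨up', hup'_length, hup'⟩ := simplify_branch up hup.left_of_append
  obtain ⟨down', hdown'_length, hdown'⟩ :=
    simplify_branch down.reverse (List.isChain_reverse.2 hdown.of_cons)
  refine ⟨up' ++ apex :: down'.reverse, ?_, by grind⟩
  calc
    Relation.ReflTransGen (SimpStep B) p.support (up' ++ apex :: down) :=
      hsupport ▸ hup' (apex :: down) (by simp)
    Relation.ReflTransGen (SimpStep B) _ (up' ++ apex :: down'.reverse) := by
      simpa using reflTransGen_simpStep_reverse (hdown' (apex :: up'.reverse) (by simp))

end RootedTree

section BridgeDecomposition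

variable {V ι : Type*} {T : SimpleGraph ι} {r : ι} {lam : ℕ} {syn : ι → ι} {B B' : ι → Set V}

/-- `syn` maps every node `v ≠ r` of the tree `T` rooted at `r` to its synchronization ancestor
`σ(v)`: the first node after `v` on the path from `v` to `r` whose level, that is, whose distance to
`r`, is divisible by `lam`. The value of `syn` at `r` is arbitrary. -/
def IsSyncAncestorMap (T : SimpleGraph ι) (r : ι) (lam : ℕ) (syn : ι → ι) : Prop :=
  ∀ v, v ≠ r → ∀ p : T.Walk v r, p.IsPath →
    ∃ l₁ l₂ : List ι, p.support = v :: (l₁ ++ syn v :: l₂) ∧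
      lam ∣ T.dist (syn v) r ∧ ∀ w ∈ l₁, ¬ lam ∣ T.dist w r

/-- `B'` is the family of bags of the bridge decomposition obtained from the bags `B` on the tree
`T` rooted at `r`, where `syn` gives the synchronization ancestors. -/
structure IsBridgeDecomp (T : SimpleGraph ι) (r : ι) (syn : ι → ι) (B B' : ι → Set V) : Prop where
  root_bag : B' r = B r
  bag_eq_biUnion : ∀ v, v ≠ r → ∀ p : T.Walk v (syn v), p.IsPath → B' v = ⋃ w ∈ p.support, B w

theorem IsSyncAncestorMap.find?_support_tail (hsyn : IsSyncAncestorMap T r lam syn) {v : ι}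
    (hv : v ≠ r) {p : T.Walk v r} (hp : p.IsPath) :
    p.support.tail.find? (lam ∣ T.dist · r) = some (syn v) := by
  obtain ⟨l₁, l₂, hsupport, hdvd, hl₁⟩ := hsyn v hv p hp
  rw [hsupport, List.tail_cons, List.find?_eq_some_iff_append]
  exact ⟨by simpa using hdvd, l₁, l₂, rfl, by simpa using hl₁⟩

theorem IsSyncAncestorMap.eq_of_isParent (hsyn : IsSyncAncestorMap T r lam syn) (hT : T.IsTree)
    {v w : ι} (h : IsParent T r v w) (hw : ¬ lam ∣ T.dist w r) : syn v = syn w := by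
  obtain ⟨p, hp, -⟩ := hT.existsUnique_path w r
  have hfind_w := hsyn.find?_support_tail (ne_root_of_not_dvd_dist hw) hp
  have hfind_v := hsyn.find?_support_tail h.ne_root (h.isPath_cons hT hp)
  rw [Walk.support_cons, List.tail_cons, ← p.cons_tail_support,
    List.find?_cons_of_neg (by simpa using hw), hfind_w] at hfind_v
  exact (Option.some.inj hfind_v).symm

theorem IsBridgeDecomp.bag_subset_of_isParent (hB' : IsBridgeDecomp T r syn B B')
    (hT : T.IsTree) (hsyn : IsSyncAncestorMap T r lam syn) {v w : ι} (h : IsParent T r v w)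
    (hw : ¬ lam ∣ T.dist w r) : B' w ⊆ B' v := by
  classical
  have hwr : w ≠ r := ne_root_of_not_dvd_dist hw
  obtain ⟨p, hp, -⟩ := hT.existsUnique_path w r
  have hmem : syn w ∈ p.support :=
    List.mem_of_mem_tail (List.mem_of_find?_eq_some (hsyn.find?_support_tail hwr hp))
  have hpath_w : (p.takeUntil _ hmem).IsPath := hp.takeUntil hmem
  have hpath_v : (Walk.cons h.1 (p.takeUntil _ hmem)).IsPath :=
    hpath_w.cons fun hv =>
      ((Walk.cons_isPath_iff _ _).1 (h.isPath_cons hT hp)).2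
        (p.support_takeUntil_subset_support hmem hv)
  have hbag_v := hB'.bag_eq_biUnion v h.ne_root
  rw [hsyn.eq_of_isParent hT h hw] at hbag_v
  rw [hB'.bag_eq_biUnion w hwr _ hpath_w, hbag_v _ hpath_v, Walk.support_cons]
  exact Set.biUnion_subset_biUnion_left fun _ => List.mem_cons_of_mem v

theorem stmt3_general (hT : T.IsTree) {d : ℕ} (hd : ∀ v, T.dist v r ≤ d) (hlam : 1 ≤ lam)
    (hsyn : IsSyncAncestorMap T r lam syn) (hB' : IsBridgeDecomp T r syn B B') :
    CombDiamLE T B' (2 * (d / lam) + 4) :=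
  combDiamLE_of_isParent_bag_subset (P := (lam ∣ T.dist · r)) hT
    (fun _ _ h hw => hB'.bag_subset_of_isParent hT hsyn h hw)
    fun _ hl => length_filter_dvd_dist_le hlam hd hl

end BridgeDecomposition

theorem stmt3 {V ι : Type*} [Fintype V] [Fintype ι]
    (G : SimpleGraph V) (T : SimpleGraph ι) (B : ι → Set V)
    (hTD : IsTreeDecomp G T B)
    (r : ι)
    -- the level of a node: the number of edges on the (unique) path to the root
    (lvl : ι → ℕ)
    (hlvl : ∀ (v : ι) (p : T.Walk v r), p.IsPath → p.length = lvl v)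
    -- the depth of the rooted decomposition
    (d : ℕ) (hd : ∀ v, lvl v ≤ d) (hde : ∃ v, lvl v = d)
    (lam : ℕ) (hlam1 : 1 ≤ lam) (hlamd : lam ≤ d)
    -- `syn v` is the synchronization ancestor of `v ≠ r`: the first node after `v`
    -- on the path from `v` to `r` whose level is divisible by `lam`
    (syn : ι → ι)
    (hsyn : ∀ v, v ≠ r → ∀ p : T.Walk v r, p.IsPath →
      ∃ l₁ l₂ : List ι, p.support = v :: (l₁ ++ syn v :: l₂) ∧
        lam ∣ lvl (syn v) ∧ ∀ w ∈ l₁, ¬ lam ∣ lvl w)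
    -- the bridge decomposition
    (B' : ι → Set V)
    (hB'r : B' r = B r)
    (hB' : ∀ v, v ≠ r → ∀ p : T.Walk v (syn v), p.IsPath →
      B' v = ⋃ w ∈ p.support, B w) :
    CombDiamLE T B' (2 * (d / lam) + 4) := by
  obtain rfl : (T.dist · r) = lvl := dist_eq_of_forall_isPath_length hTD.isTree.connected hlvl
  exact stmt3_general hTD.isTree hd hlam1 hsyn ⟨hB'r, hB'⟩
end

section
/- Let (T, B) be a tree decomposition of a graph G, rooted at r, of depth d, with maximum bag size m = max_w |B_w|, and let λ be an integer with 1 ≤ λ ≤ d. Then the highway decomposition (T, B') is a tree decomposition of G, and every bag satisfies |B'_v| ≤ (λ + ⌊d/λ⌋ + 2) · m. -/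
/-!
STATEMENT 4: Let (T, B) be a tree decomposition of a graph G, rooted at r, of depth d,
with maximum bag size m = max_w |B_w|, and let λ be an integer with 1 ≤ λ ≤ d. Then
the highway decomposition (T, B') is a tree decomposition of G, and every bag satisfies
|B'_v| ≤ (λ + ⌊d/λ⌋ + 2) · m.
-/

open SimpleGraph

/-!
Replace every bag `B v` by the union of the bags over a set `A v` of nodes containing `v`. The
result is again a tree decomposition as soon as `w ∈ A v` implies `w ∈ A u` for every `u` on the
path from `v` to `w`: a vertex of `G` in the new bag at `v` then stays in the new bags all the way
to an old bag containing it, and the old bags containing it are already connected. The highway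
decomposition has this form, where `A v` consists of the ancestors `w` of `v` that are
synchronization nodes or that have no synchronization node strictly between themselves and `v`.

For the size of `A v`, note that the level is injective on the ancestors of `v`. The levels that
occur are multiples of `λ`, or at most `λ` below the level of `v`, since a longer stretch would
contain a multiple of `λ`.
-/

section GeodesicInterval

variable {ι : Type*} {T : SimpleGraph ι} {r u v w x : ι}

/-- The vertices lying on some shortest path from `u` to `v`. In a tree this is the vertex set of
the path from `u` to `v`; describing it by distances turns statements about subpaths into linear
arithmetic. It is meaningful for connected graphs only, as `SimpleGraph.dist` is `0` between
different components. -/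
def geodesicInterval (T : SimpleGraph ι) (u v : ι) : Set ι :=
  {w | T.dist u w + T.dist w v = T.dist u v}

/-- The vertices strictly between `u` and `v`: the geodesic interval without its endpoints. -/
def geodesicInterior (T : SimpleGraph ι) (u v : ι) : Set ι :=
  geodesicInterval T u v \ {u, v}

theorem mem_geodesicInterval :
    w ∈ geodesicInterval T u v ↔ T.dist u w + T.dist w v = T.dist u v :=
  Iff.rfl

theorem left_mem_geodesicInterval : u ∈ geodesicInterval T u v := by
  simp [mem_geodesicInterval]

theorem right_mem_geodesicInterval : v ∈ geodesicInterval T u v := by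
  simp [mem_geodesicInterval]

theorem geodesicInterval_comm : geodesicInterval T u v = geodesicInterval T v u := by
  ext w
  rw [mem_geodesicInterval, mem_geodesicInterval, T.dist_comm (u := u) (v := w),
    T.dist_comm (u := w) (v := v), T.dist_comm (u := u) (v := v), add_comm]

theorem geodesicInterior_comm : geodesicInterior T u v = geodesicInterior T v u := by
  rw [geodesicInterior, geodesicInterior, geodesicInterval_comm, Set.pair_comm]

theorem dist_le_of_mem_geodesicInterval (hw : w ∈ geodesicInterval T v r) :
    T.dist w r ≤ T.dist v r :=
  (Nat.le_add_left _ _).trans_eq hw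

theorem geodesicInterval_self (hT : T.Connected) : geodesicInterval T u u = {u} := by
  ext w
  simp [mem_geodesicInterval, hT.dist_eq_zero_iff, eq_comm]

theorem mem_geodesicInterval_tail (hT : T.Connected) (hw : w ∈ geodesicInterval T v r)
    (hu : u ∈ geodesicInterval T v w) : w ∈ geodesicInterval T u r := by
  rw [mem_geodesicInterval] at *
  have := hT.dist_triangle (u := v) (v := u) (w := r)
  have := hT.dist_triangle (u := u) (v := w) (w := r)
  lia

theorem mem_geodesicInterval_of_tail (hT : T.Connected) (hw : w ∈ geodesicInterval T v r)
    (hx : x ∈ geodesicInterval T w r) : w ∈ geodesicInterval T v x := by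
  rw [geodesicInterval_comm] at *
  exact mem_geodesicInterval_tail hT hw hx

theorem geodesicInterval_subset_left (hT : T.Connected) (hw : w ∈ geodesicInterval T v r) :
    geodesicInterval T v w ⊆ geodesicInterval T v r := by
  intro u hu
  have hwu := mem_geodesicInterval_tail hT hw hu
  rw [mem_geodesicInterval] at *
  lia

theorem mem_geodesicInterval_antisymm (hT : T.Connected) (hu : u ∈ geodesicInterval T v w)
    (hw : w ∈ geodesicInterval T v u) : u = w := by
  rw [mem_geodesicInterval] at *
  exact hT.dist_eq_zero_iff.mp (by lia)

theorem geodesicInterior_subset_left (hT : T.Connected) (hw : w ∈ geodesicInterval T v r) :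
    geodesicInterior T v w ⊆ geodesicInterior T v r := by
  rintro x ⟨hx, hxvw⟩
  simp only [Set.mem_insert_iff, Set.mem_singleton_iff, not_or] at hxvw
  refine ⟨geodesicInterval_subset_left hT hw hx, ?_⟩
  rintro (rfl | rfl)
  · exact hxvw.1 rfl
  · exact hxvw.2 (mem_geodesicInterval_antisymm hT hx hw)

theorem geodesicInterior_subset_right (hT : T.Connected) (hw : w ∈ geodesicInterval T v r) :
    geodesicInterior T w r ⊆ geodesicInterior T v r := by
  rw [geodesicInterval_comm] at hw
  rw [geodesicInterior_comm, geodesicInterior_comm (u := v)]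
  exact geodesicInterior_subset_left hT hw

theorem mem_geodesicInterval_of_mem_support {p : T.Walk u v} (hp : p.length = T.dist u v)
    (hw : w ∈ p.support) : w ∈ geodesicInterval T u v := by
  classical
  have hlength : (p.takeUntil w hw).length + (p.dropUntil w hw).length = p.length := by
    rw [← Walk.length_append, Walk.take_spec]
  have := T.dist_le (p.takeUntil w hw)
  have := T.dist_le (p.dropUntil w hw)
  have := (p.takeUntil w hw).reachable.dist_triangle_left v
  rw [mem_geodesicInterval]
  lia

theorem exists_mem_geodesicInterval_dist_eq (hT : T.Connected) {k : ℕ} (hk : k ≤ T.dist v r) :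
    ∃ x ∈ geodesicInterval T v r, T.dist x r = k := by
  obtain ⟨p, hp⟩ := hT.exists_walk_length_eq_dist v r
  have hx := mem_geodesicInterval_of_mem_support hp (p.getVert_mem_support (T.dist v r - k))
  have htake := T.dist_le (p.take (T.dist v r - k))
  have hdrop := T.dist_le (p.drop (T.dist v r - k))
  refine ⟨_, hx, ?_⟩
  rw [mem_geodesicInterval] at hx
  rw [Walk.take_length] at htake
  rw [Walk.drop_length] at hdrop
  lia

end GeodesicInterval

section Tree

variable {ι : Type*} {T : SimpleGraph ι} {r s u v w x : ι}

theorem length_eq_dist_of_isPath (hT : T.IsAcyclic) {p : T.Walk u v} (hp : p.IsPath) :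
    p.length = T.dist u v := by
  obtain ⟨q, hq, hlength⟩ := p.reachable.exists_path_of_dist
  obtain rfl : p = q := Subtype.mk.inj ((hT.subsingleton_path u v).elim ⟨p, hp⟩ ⟨q, hq⟩)
  exact hlength

theorem support_subset_support_of_isPath (hT : T.IsAcyclic) {p : T.Walk u v} (hp : p.IsPath)
    (q : T.Walk u v) : p.support ⊆ q.support := by
  classical
  obtain rfl : p = q.bypass :=
    Subtype.mk.inj ((hT.subsingleton_path u v).elim ⟨p, hp⟩ ⟨_, q.bypass_isPath⟩)
  exact q.support_bypass_subset_support

theorem mem_support_iff_mem_geodesicInterval (hT : T.IsTree) {p : T.Walk u v} (hp : p.IsPath) :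
    w ∈ p.support ↔ w ∈ geodesicInterval T u v := by
  refine ⟨mem_geodesicInterval_of_mem_support (length_eq_dist_of_isPath hT.isAcyclic hp),
    fun hw ↦ ?_⟩
  obtain ⟨p₁, hp₁⟩ := hT.connected.exists_walk_length_eq_dist u w
  obtain ⟨p₂, hp₂⟩ := hT.connected.exists_walk_length_eq_dist w v
  have hpath : (p₁.append p₂).IsPath :=
    Walk.isPath_of_length_eq_dist _ (by rw [Walk.length_append, hp₁, hp₂, hw])
  rw [(hT.existsUnique_path u v).unique hp hpath, Walk.mem_support_append_iff]
  exact Or.inl p₁.end_mem_support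

theorem geodesicInterval_subset_union (hT : T.IsTree) (u v w : ι) :
    geodesicInterval T u v ⊆ geodesicInterval T u w ∪ geodesicInterval T w v := by
  intro x hx
  obtain ⟨p, hp⟩ := (hT.existsUnique_path u v).exists
  obtain ⟨p₁, hp₁⟩ := (hT.existsUnique_path u w).exists
  obtain ⟨p₂, hp₂⟩ := (hT.existsUnique_path w v).exists
  rw [← mem_support_iff_mem_geodesicInterval hT hp] at hx
  rw [Set.mem_union, ← mem_support_iff_mem_geodesicInterval hT hp₁,
    ← mem_support_iff_mem_geodesicInterval hT hp₂, ← Walk.mem_support_append_iff]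
  exact support_subset_support_of_isPath hT.isAcyclic hp _ hx

theorem mem_geodesicInterval_of_dist_le (hT : T.IsTree) (hx : x ∈ geodesicInterval T v r)
    (hdist : T.dist w r ≤ T.dist x r) :
    x ∈ geodesicInterval T v w := by
  rcases geodesicInterval_subset_union hT v r w hx with hx' | hx'
  · exact hx'
  · have hwx : w = x := hT.connected.dist_eq_zero_iff.mp (by rw [mem_geodesicInterval] at hx'; lia)
    exact hwx ▸ right_mem_geodesicInterval

theorem injOn_dist_geodesicInterval (hT : T.IsTree) :
    Set.InjOn (fun w ↦ T.dist w r) (geodesicInterval T v r) := fun _ hw _ hx hdist ↦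
  mem_geodesicInterval_antisymm hT.connected (mem_geodesicInterval_of_dist_le hT hw hdist.ge)
    (mem_geodesicInterval_of_dist_le hT hx hdist.le)

theorem pairwise_dist_lt_support (hT : T.IsTree) {p : T.Walk v r} (hp : p.IsPath) :
    p.support.Pairwise fun a b ↦ T.dist b r < T.dist a r := by
  induction p with
  | nil => simp
  | cons hadj q ih =>
    have hlength := length_eq_dist_of_isPath hT.isAcyclic hp
    rw [Walk.length_cons, length_eq_dist_of_isPath hT.isAcyclic hp.of_cons] at hlength
    refine List.pairwise_cons.mpr ⟨fun b hb ↦ ?_, ih hp.of_cons⟩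
    have := dist_le_of_mem_geodesicInterval
      ((mem_support_iff_mem_geodesicInterval hT hp.of_cons).mp hb)
    lia

theorem mem_of_mem_geodesicInterior_of_support_eq (hT : T.IsTree) {p : T.Walk v r} (hp : p.IsPath)
    {l₁ l₂ : List ι} (hsupport : p.support = v :: (l₁ ++ s :: l₂))
    (hx : x ∈ geodesicInterior T v s) : x ∈ l₁ := by
  obtain ⟨hxvs, hne⟩ := hx
  have hs : s ∈ geodesicInterval T v r :=
    (mem_support_iff_mem_geodesicInterval hT hp).mp (by simp [hsupport])
  have hxp : x ∈ p.support := (mem_support_iff_mem_geodesicInterval hT hp).mpr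
    (geodesicInterval_subset_left hT.connected hs hxvs)
  have hx_notMem : x ∉ l₂ := fun hx₂ ↦ by
    have hpairwise := pairwise_dist_lt_support hT hp
    rw [hsupport, List.pairwise_cons, List.pairwise_append, List.pairwise_cons] at hpairwise
    exact (hpairwise.2.2.1.1 x hx₂).not_ge
      (dist_le_of_mem_geodesicInterval (mem_geodesicInterval_tail hT.connected hs hxvs))
  simp only [hsupport, List.mem_cons, List.mem_append] at hxp
  simp only [Set.mem_insert_iff, Set.mem_singleton_iff] at hne
  tauto

end Tree

section HighwayNodes

variable {ι : Type*} {T : SimpleGraph ι} {r s u v w : ι} {S : Set ι}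

/-- The nodes whose bags make up the highway bag at `v`, for the root `r` and an arbitrary set `S`
of synchronization nodes: the ancestors of `v` (including `v`) that are synchronization nodes or
that have none strictly between themselves and `v`. -/
def highwayNodes (T : SimpleGraph ι) (r : ι) (S : Set ι) (v : ι) : Set ι :=
  {w ∈ geodesicInterval T v r | w ∈ S ∨ Disjoint (geodesicInterior T v w) S}

theorem self_mem_highwayNodes (hT : T.Connected) : v ∈ highwayNodes T r S v :=
  ⟨left_mem_geodesicInterval, Or.inr (by simp [geodesicInterior, geodesicInterval_self hT])⟩

theorem highwayNodes_root (hT : T.Connected) : highwayNodes T r S r = {r} :=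
  Set.Subset.antisymm (fun _ hw ↦ geodesicInterval_self hT ▸ hw.1)
    (Set.singleton_subset_iff.mpr (self_mem_highwayNodes hT))

theorem mem_highwayNodes_of_mem_geodesicInterval (hT : T.Connected)
    (hw : w ∈ highwayNodes T r S v) (hu : u ∈ geodesicInterval T v w) :
    w ∈ highwayNodes T r S u :=
  ⟨mem_geodesicInterval_tail hT hw.1 hu,
    hw.2.imp_right fun hdisj ↦ hdisj.mono_left (geodesicInterior_subset_right hT hu)⟩

theorem mem_geodesicInterval_iff_disjoint_of_first (hT : T.IsTree)
    (hs : s ∈ geodesicInterval T v r) (hsv : s ≠ v) (hsS : s ∈ S)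
    (hfirst : Disjoint (geodesicInterior T v s) S) (hw : w ∈ geodesicInterval T v r) :
    w ∈ geodesicInterval T v s ↔ Disjoint (geodesicInterior T v w) S := by
  refine ⟨fun hws ↦ hfirst.mono_left (geodesicInterior_subset_left hT.connected hws),
    fun hdisj ↦ ?_⟩
  rcases geodesicInterval_subset_union hT v r s hw with hws | hws
  · exact hws
  · have hsw : s ∈ geodesicInterval T v w := mem_geodesicInterval_of_tail hT.connected hs hws
    by_cases hsw_eq : s = w
    · exact hsw_eq ▸ right_mem_geodesicInterval
    · exact absurd hsS (Set.disjoint_left.mp hdisj ⟨hsw, by simp [hsv, hsw_eq]⟩)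

theorem highwayNodes_eq_of_support_eq (hT : T.IsTree) {p : T.Walk v r} (hp : p.IsPath)
    {q : T.Walk v s} (hq : q.IsPath) {l₁ l₂ : List ι}
    (hsupport : p.support = v :: (l₁ ++ s :: l₂)) (hsS : s ∈ S) (hl₁ : ∀ w ∈ l₁, w ∉ S) :
    highwayNodes T r S v = {w | w ∈ p.support ∧ (w ∈ q.support ∨ w ∈ S)} := by
  have hs : s ∈ geodesicInterval T v r :=
    (mem_support_iff_mem_geodesicInterval hT hp).mp (by simp [hsupport])
  have hsv : s ≠ v := by
    have hnodup := hp.support_nodup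
    rw [hsupport, List.nodup_cons] at hnodup
    rintro rfl
    exact hnodup.1 (by simp)
  have hfirst : Disjoint (geodesicInterior T v s) S := Set.disjoint_left.mpr fun x hx ↦
    hl₁ x (mem_of_mem_geodesicInterior_of_support_eq hT hp hsupport hx)
  ext w
  rw [Set.mem_ofPred_eq, mem_support_iff_mem_geodesicInterval hT hp,
    mem_support_iff_mem_geodesicInterval hT hq, or_comm]
  exact and_congr_right fun hw ↦
    or_congr_right (mem_geodesicInterval_iff_disjoint_of_first hT hs hsv hsS hfirst hw).symm

end HighwayNodes

section Card

variable {ι : Type*} {T : SimpleGraph ι} {r v w : ι} {n : ℕ}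

theorem dist_le_add_of_disjoint_multiples (hT : T.IsTree) (hn : 0 < n)
    (hdisj : Disjoint (geodesicInterior T v w) {x | n ∣ T.dist x r}) :
    T.dist v r ≤ T.dist w r + n := by
  by_contra! hlt
  have hlow : T.dist w r < n * (T.dist w r / n + 1) := Nat.lt_mul_div_succ _ hn
  have hhigh : n * (T.dist w r / n + 1) ≤ T.dist w r + n := by
    rw [mul_add_one]
    exact Nat.add_le_add_right (Nat.mul_div_le _ _) n
  obtain ⟨x, hx, hdist⟩ :=
    exists_mem_geodesicInterval_dist_eq hT.connected (hhigh.trans hlt.le)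
  have hxw : x ∈ geodesicInterval T v w := mem_geodesicInterval_of_dist_le hT hx (by lia)
  refine Set.disjoint_left.mp hdisj ⟨hxw, ?_⟩ (Dvd.intro _ hdist.symm)
  rintro (rfl | rfl) <;> lia

theorem card_Icc_union_multiples_le (n N : ℕ) :
    (Finset.Icc (N - n) N ∪ {k ∈ Finset.Icc 0 N | n ∣ k}).card ≤ n + N / n + 2 := by
  have hmultiples : ({k ∈ Finset.Icc 0 N | n ∣ k} : Finset ℕ).card ≤ N / n + 1 := by
    rw [← Finset.Ioc_insert_left N.zero_le, ← Nat.Ioc_filter_dvd_card_eq_div,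
      Finset.filter_insert, if_pos (dvd_zero n)]
    exact Finset.card_insert_le _ _
  have hunion := Finset.card_union_le (Finset.Icc (N - n) N) {k ∈ Finset.Icc 0 N | n ∣ k}
  rw [Nat.card_Icc] at hunion
  lia

theorem encard_highwayNodes_le (hT : T.IsTree) (hn : 0 < n) :
    (highwayNodes T r {x | n ∣ T.dist x r} v).encard ≤ (n + T.dist v r / n + 2 : ℕ) := by
  refine (Set.encard_le_encard_of_injOn (t := (Finset.Icc (T.dist v r - n) (T.dist v r) ∪
    {k ∈ Finset.Icc 0 (T.dist v r) | n ∣ k} : Finset ℕ)) ?_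
    ((injOn_dist_geodesicInterval hT).mono fun _ hw ↦ hw.1)).trans ?_
  · rintro w ⟨hw, hdvd | hdisj⟩
    · have := dist_le_of_mem_geodesicInterval hw
      simp_all
    · have := dist_le_of_mem_geodesicInterval hw
      have := dist_le_add_of_disjoint_multiples hT hn hdisj
      simp_all
  · rw [Set.encard_coe_eq_coe_finsetCard]
    exact_mod_cast card_Icc_union_multiples_le n (T.dist v r)

theorem encard_biUnion_le_mul {V : Type*} {A : Set ι} {B : ι → Set V} {m : ℕ∞}
    (hA : A.encard ≤ n) (hB : ∀ w ∈ A, (B w).encard ≤ m) :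
    (⋃ w ∈ A, B w).encard ≤ n * m := by
  lift A to Finset ι using Set.finite_of_encard_le_coe hA
  calc (⋃ w ∈ A, B w).encard
      ≤ ∑ w ∈ A, (B w).encard := A.set_encard_biUnion_le B
    _ ≤ A.card • m := Finset.sum_le_card_nsmul A _ m hB
    _ = (A : Set ι).encard * m := by rw [nsmul_eq_mul, Set.encard_coe_eq_coe_finsetCard]
    _ ≤ n * m := by gcongr

end Card

theorem IsTreeDecomp.biUnion {V ι : Type*} {G : SimpleGraph V} {T : SimpleGraph ι}
    {B : ι → Set V} (hTD : IsTreeDecomp G T B) {A : ι → Set ι} (hself : ∀ v, v ∈ A v)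
    (hclosed : ∀ ⦃u v w⦄, w ∈ A v → u ∈ geodesicInterval T v w → w ∈ A u) :
    IsTreeDecomp G T fun v ↦ ⋃ w ∈ A v, B w := by
  have hsub : ∀ v, B v ⊆ ⋃ w ∈ A v, B w := fun v ↦ Set.subset_biUnion_of_mem (hself v)
  refine ⟨hTD.isTree, fun x ↦ ?_, fun x y hxy ↦ ?_, fun x i j hi hj p hp k hk ↦ ?_⟩
  · exact (hTD.exists_bag x).imp fun i hx ↦ hsub i hx
  · exact (hTD.edge_bag hxy).imp fun i hxy ↦ hxy.imp (@hsub i x) (@hsub i y)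
  · obtain ⟨a, ha, hxa⟩ := Set.mem_iUnion₂.mp hi
    obtain ⟨b, hb, hxb⟩ := Set.mem_iUnion₂.mp hj
    rw [mem_support_iff_mem_geodesicInterval hTD.isTree hp] at hk
    rcases geodesicInterval_subset_union hTD.isTree i j a hk with hia | haj
    · exact Set.mem_biUnion (hclosed ha hia) hxa
    rcases geodesicInterval_subset_union hTD.isTree a j b haj with hab | hbj
    · obtain ⟨q, hq⟩ := (hTD.isTree.existsUnique_path a b).exists
      exact hsub k (hTD.bag_connected x a b hxa hxb q hq k
        ((mem_support_iff_mem_geodesicInterval hTD.isTree hq).mpr hab))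
    · rw [geodesicInterval_comm] at hbj
      exact Set.mem_biUnion (hclosed hb hbj) hxb

theorem stmt4_general {V ι : Type*}
    (G : SimpleGraph V) (T : SimpleGraph ι) (B : ι → Set V)
    (hTD : IsTreeDecomp G T B)
    (r : ι)
    (lvl : ι → ℕ)
    (hlvl : ∀ (v : ι) (p : T.Walk v r), p.IsPath → p.length = lvl v)
    (m : ℕ∞) (hm : ∀ w, (B w).encard ≤ m)
    (lam : ℕ) (hlam1 : 1 ≤ lam)
    (syn : ι → ι)
    (hsyn : ∀ v, v ≠ r → ∀ p : T.Walk v r, p.IsPath →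
      ∃ l₁ l₂ : List ι, p.support = v :: (l₁ ++ syn v :: l₂) ∧
        lam ∣ lvl (syn v) ∧ ∀ w ∈ l₁, ¬ lam ∣ lvl w)
    (B' : ι → Set V)
    (hB'r : B' r = B r)
    (hB' : ∀ v, v ≠ r → ∀ pr : T.Walk v r, pr.IsPath → ∀ ps : T.Walk v (syn v), ps.IsPath →
      B' v = ⋃ w ∈ {w : ι | w ∈ pr.support ∧ (w ∈ ps.support ∨ lam ∣ lvl w)}, B w) :
    IsTreeDecomp G T B' ∧ ∀ v, (B' v).encard ≤ (lam + lvl v / lam + 2 : ℕ) * m := by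
  have hT := hTD.isTree
  obtain rfl : lvl = fun v ↦ T.dist v r := by
    funext v
    obtain ⟨p, hp⟩ := (hT.existsUnique_path v r).exists
    rw [← hlvl v p hp, length_eq_dist_of_isPath hT.isAcyclic hp]
  obtain rfl : B' = fun v ↦ ⋃ w ∈ highwayNodes T r {x | lam ∣ T.dist x r} v, B w := by
    funext v
    by_cases hv : v = r
    · rw [hv, hB'r, highwayNodes_root hT.connected, Set.biUnion_singleton]
    · obtain ⟨p, hp⟩ := (hT.existsUnique_path v r).exists
      obtain ⟨q, hq⟩ := (hT.existsUnique_path v (syn v)).exists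
      obtain ⟨l₁, l₂, hsupport, hdvd, hl₁⟩ := hsyn v hv p hp
      rw [hB' v hv p hp q hq,
        highwayNodes_eq_of_support_eq (S := {x | lam ∣ T.dist x r}) hT hp hq hsupport hdvd hl₁]
      rfl
  exact ⟨hTD.biUnion (fun _ ↦ self_mem_highwayNodes hT.connected)
      fun _ _ _ ↦ mem_highwayNodes_of_mem_geodesicInterval hT.connected,
    fun v ↦ encard_biUnion_le_mul (encard_highwayNodes_le hT hlam1) fun w _ ↦ hm w⟩

theorem stmt4 {V ι : Type*} [Fintype V] [Fintype ι]
    (G : SimpleGraph V) (T : SimpleGraph ι) (B : ι → Set V)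
    (hTD : IsTreeDecomp G T B)
    (r : ι)
    -- the level of a node: the number of edges on the (unique) path to the root
    (lvl : ι → ℕ)
    (hlvl : ∀ (v : ι) (p : T.Walk v r), p.IsPath → p.length = lvl v)
    -- the depth of the rooted decomposition
    (d : ℕ) (hd : ∀ v, lvl v ≤ d) (hde : ∃ v, lvl v = d)
    -- the maximum bag size
    (m : ℕ) (hm : m = Finset.univ.sup fun w => (B w).ncard)
    (lam : ℕ) (hlam1 : 1 ≤ lam) (hlamd : lam ≤ d)
    -- `syn v` is the synchronization ancestor of `v ≠ r`: the first node after `v`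
    -- on the path from `v` to `r` whose level is divisible by `lam`
    (syn : ι → ι)
    (hsyn : ∀ v, v ≠ r → ∀ p : T.Walk v r, p.IsPath →
      ∃ l₁ l₂ : List ι, p.support = v :: (l₁ ++ syn v :: l₂) ∧
        lam ∣ lvl (syn v) ∧ ∀ w ∈ l₁, ¬ lam ∣ lvl w)
    -- the highway decomposition
    (B' : ι → Set V)
    (hB'r : B' r = B r)
    (hB' : ∀ v, v ≠ r → ∀ pr : T.Walk v r, pr.IsPath → ∀ ps : T.Walk v (syn v), ps.IsPath →
      B' v = ⋃ w ∈ {w : ι | w ∈ pr.support ∧ (w ∈ ps.support ∨ lam ∣ lvl w)}, B w) :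
    IsTreeDecomp G T B' ∧ ∀ v, (B' v).ncard ≤ (lam + d / lam + 2) * m := by
  have hbag : ∀ w, (B w).encard ≤ m := fun w ↦ Set.encard_le_coe_iff_finite_ncard_le.mpr
    ⟨(B w).toFinite, hm ▸ Finset.le_sup (f := fun w ↦ (B w).ncard) (Finset.mem_univ w)⟩
  obtain ⟨hTD', hcard⟩ :=
    stmt4_general G T B hTD r lvl hlvl m hbag lam hlam1 syn hsyn B' hB'r hB'
  refine ⟨hTD', fun v ↦ ENat.toNat_le_of_le_natCast ((hcard v).trans ?_)⟩
  exact_mod_cast Nat.mul_le_mul_right m (by gcongr; exact hd v)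
end

section
/- For the sequential-sampling distribution A determined by bags B_1, …, B_ℓ and distributions μ_1, …, μ_ℓ, the marginal on each bag is correct: for every index i and every assignment g : B_i → {0,1}, Pr_{f ∼ A}[ f|_{B_i} = g ] = μ_i(g). -/
/-!
STATEMENT 7: For the sequential-sampling distribution A determined by bags B_1, …, B_ℓ
and distributions μ_1, …, μ_ℓ, the marginal on each bag is correct: for every index i
and every assignment g : B_i → {0,1}, Pr_{f ∼ A}[ f|_{B_i} = g ] = μ_i(g).
-/

variable {V : Type*} [Fintype V] [DecidableEq V]

/-- Restriction of an assignment of `S'` to a subset `S ⊆ S'`. -/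
def res {S S' : Finset V} (h : S ⊆ S') (f : ↥S' → Bool) : ↥S → Bool :=
  fun x => f ⟨x.1, h x.2⟩

/-- The marginal on assignments of `S ⊆ S'` of a distribution `μ` on assignments
of `S'`. -/
noncomputable def marg {S S' : Finset V} (h : S ⊆ S') (μ : (↥S' → Bool) → ℝ) :
    (↥S → Bool) → ℝ :=
  fun g => ∑ f : ↥S' → Bool, if res h f = g then μ f else 0

/-- The sequential-sampling distribution on assignments of `B 0 ∪ … ∪ B (ℓ-1)`:
sample `f|_{B 0}` from `μ 0`; then, for `i = 1, …, ℓ-1` in order, sample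
`f|_{B i \ B (i-1)}` from the conditional distribution of `μ i` given that it agrees
with the already-determined values on `B i ∩ B (i-1)`.  (Each step contributes the
conditional probability `μ i (f|_{B i}) / (marginal of μ i on B i ∩ B (i-1)) (f|_{B i ∩ B (i-1)})`.) -/
noncomputable def seqDensity (ℓ : ℕ) (B : Fin ℓ → Finset V)
    (μ : ∀ i, (↥(B i) → Bool) → ℝ) :
    (↥(Finset.univ.biUnion B) → Bool) → ℝ := fun f =>
  ∏ i : Fin ℓ,
    if (i : ℕ) = 0 then
      μ i (res (Finset.subset_biUnion_of_mem B (Finset.mem_univ i)) f)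
    else
      μ i (res (Finset.subset_biUnion_of_mem B (Finset.mem_univ i)) f) /
        marg
          (show B i ∩ B ⟨(i : ℕ) - 1, lt_of_le_of_lt (Nat.sub_le _ _) i.isLt⟩ ⊆ B i from
            Finset.inter_subset_left)
          (μ i)
          (res
            (Finset.Subset.trans Finset.inter_subset_left
              (Finset.subset_biUnion_of_mem B (Finset.mem_univ i))) f)

/-!
Sampling one more bag amounts to multiplying the density by the conditional density of the new bag
given its separator. By the interval property, the part `T` already sampled meets the new bag `C`
exactly in the separator `S`, so that marginalizing to `C` a function of the `T`-part is the same as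
marginalizing it to `S` (`marg_comp_res`). Since a conditional density has marginal `1` on the
separator, the new factor does not disturb the marginal on `T`; and since consistency makes the
marginal of the old density on `S` cancel the denominator, the marginal on `C` is the one required.
-/

section Marginals

variable {α : Type*} {S T C W : Finset α}

theorem res_surjective (h : S ⊆ T) : Function.Surjective (res h) :=
  (Set.inclusion_injective h).surjective_comp_right

variable [DecidableEq α]

theorem res_ext {hT : T ⊆ W} {hC : C ⊆ W} (hW : W ⊆ T ∪ C) {f f' : ↥W → Bool}
    (hfT : res hT f = res hT f') (hfC : res hC f = res hC f') : f = f' := by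
  funext ⟨x, hx⟩
  obtain hxT | hxC := Finset.mem_union.1 (hW hx)
  · exact congrFun hfT ⟨x, hxT⟩
  · exact congrFun hfC ⟨x, hxC⟩

theorem exists_res_eq_and_res_eq (hT : T ⊆ W) (hC : C ⊆ W) {t : ↥T → Bool} {c : ↥C → Bool}
    (h : res (Finset.inter_subset_left : T ∩ C ⊆ T) t = res Finset.inter_subset_right c) :
    ∃ f : ↥W → Bool, res hT f = t ∧ res hC f = c := by
  obtain ⟨c', rfl⟩ := res_surjective hC c
  refine ⟨fun x => if hx : x.1 ∈ T then t ⟨x.1, hx⟩ else c' x, ?_, ?_⟩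
  · funext x
    simp [res]
  · funext x
    by_cases hx : x.1 ∈ T
    · simpa [res, hx] using congrFun h ⟨x.1, Finset.mem_inter.2 ⟨hx, x.2⟩⟩
    · simp [res, hx]

theorem marg_pos (h : S ⊆ T) {μ : (↥T → Bool) → ℝ} (hμ : ∀ t, 0 < μ t) (s : ↥S → Bool) :
    0 < marg h μ s := by
  obtain ⟨t, ht⟩ := res_surjective h s
  refine Finset.sum_pos' (fun t' _ => ?_) ⟨t, Finset.mem_univ t, by simpa [ht] using hμ t⟩
  split_ifs
  exacts [(hμ t').le, le_rfl]

theorem marg_marg (hST : S ⊆ T) (hTW : T ⊆ W) (D : (↥W → Bool) → ℝ) :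
    marg hST (marg hTW D) = marg (hST.trans hTW) D := by
  funext s
  simp only [marg, ← Finset.sum_filter]
  refine (Finset.sum_comm' fun t f => ?_).trans
    (Finset.sum_congr rfl fun f _ => Finset.sum_singleton (fun _ => D f) (res hTW f))
  simp only [Finset.mem_filter, Finset.mem_univ, true_and, Finset.mem_singleton]
  constructor <;>
  · rintro ⟨rfl, rfl⟩
    exact ⟨rfl, rfl⟩

theorem marg_res_mul (h : T ⊆ W) (φ : (↥T → Bool) → ℝ) (ψ : (↥W → Bool) → ℝ) :
    marg h (fun f => φ (res h f) * ψ f) = fun t => φ t * marg h ψ t := by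
  funext t
  simp only [marg, Finset.mul_sum, mul_ite, mul_zero]
  refine Finset.sum_congr rfl fun f _ => ite_congr rfl (fun hf => ?_) fun _ => rfl
  rw [hf]

theorem marg_comp_res (sq : Lattice.BicartSq S T C W) (D : (↥T → Bool) → ℝ) :
    marg sq.le₃₄ (fun f => D (res sq.le₂₄ f)) = fun c => marg sq.le₁₂ D (res sq.le₁₃ c) := by
  funext c
  simp only [marg, ← Finset.sum_filter]
  refine Finset.sum_nbij (res sq.le₂₄) ?_ ?_ ?_ fun _ _ => rfl
  · intro f hf
    obtain rfl : res sq.le₃₄ f = c := by simpa using hf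
    simp only [Finset.mem_filter, Finset.mem_univ, true_and]
    rfl
  · intro f hf f' hf' hT
    have hf : res sq.le₃₄ f = c := by simpa using hf
    have hf' : res sq.le₃₄ f' = c := by simpa using hf'
    exact res_ext sq.sup_eq.ge hT (hf.trans hf'.symm)
  · intro t ht
    obtain rfl := sq.inf_eq
    obtain ⟨f, hfT, hfC⟩ := exists_res_eq_and_res_eq sq.le₂₄ sq.le₃₄ (by simpa using ht)
    exact ⟨f, by simpa using hfC, hfT⟩

theorem marg_comp_res_of_superset (h : S ⊆ W) (h' : W ⊆ S) (μ : (↥S → Bool) → ℝ) :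
    marg h (fun f => μ (res h f)) = μ := by
  obtain rfl := h.antisymm h'
  funext g
  exact Fintype.sum_ite_eq' g μ

end Marginals

section Conditioning

variable {α : Type*} [DecidableEq α] {S T C W : Finset α}

/-- The conditional density of `μ` given the values on `S ⊆ C`, as a function of the whole
assignment of `C`. It is `0` where the marginal of `μ` on `S` vanishes. -/
noncomputable def condDensity (h : S ⊆ C) (μ : (↥C → Bool) → ℝ) : (↥C → Bool) → ℝ :=
  fun c => μ c / marg h μ (res h c)

theorem condDensity_mul_marg (h : S ⊆ C) {μ : (↥C → Bool) → ℝ} {c : ↥C → Bool}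
    (hμ : marg h μ (res h c) ≠ 0) : condDensity h μ c * marg h μ (res h c) = μ c :=
  div_mul_cancel₀ _ hμ

theorem marg_condDensity (h : S ⊆ C) {μ : (↥C → Bool) → ℝ} (hμ : ∀ s, marg h μ s ≠ 0) :
    marg h (condDensity h μ) = 1 := by
  have hcond : condDensity h μ = fun c => (marg h μ)⁻¹ (res h c) * μ c := by
    funext c
    exact div_eq_inv_mul _ _
  rw [hcond, marg_res_mul]
  funext s
  exact inv_mul_cancel₀ (hμ s)

theorem marg_left_mul_condDensity (sq : Lattice.BicartSq S T C W) (D : (↥T → Bool) → ℝ)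
    {μ : (↥C → Bool) → ℝ} (hμ : ∀ s, marg sq.le₁₃ μ s ≠ 0) :
    marg sq.le₂₄ (fun f => D (res sq.le₂₄ f) * condDensity sq.le₁₃ μ (res sq.le₃₄ f)) = D := by
  have sq' : Lattice.BicartSq S C T W := ⟨sup_comm C T ▸ sq.sup_eq, inf_comm C T ▸ sq.inf_eq⟩
  rw [marg_res_mul, marg_comp_res sq', marg_condDensity _ hμ]
  exact mul_one D

theorem marg_right_mul_condDensity (sq : Lattice.BicartSq S T C W) {D : (↥T → Bool) → ℝ}
    {μ : (↥C → Bool) → ℝ} (hμ : ∀ s, marg sq.le₁₃ μ s ≠ 0)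
    (hD : marg sq.le₁₂ D = marg sq.le₁₃ μ) :
    marg sq.le₃₄ (fun f => D (res sq.le₂₄ f) * condDensity sq.le₁₃ μ (res sq.le₃₄ f)) = μ := by
  simp only [mul_comm (D _)]
  rw [marg_res_mul, marg_comp_res sq, hD]
  funext c
  exact condDensity_mul_marg _ (hμ _)

end Conditioning

section SequentialSampling

variable {α : Type*} [DecidableEq α]

theorem bicartSq_biUnion_castSucc {n : ℕ} {B : Fin (n + 2) → Finset α}
    (hint : ∀ i k j : Fin (n + 2), i ≤ k → k ≤ j → B i ∩ B j ⊆ B k) :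
    Lattice.BicartSq (B (Fin.last (n + 1)) ∩ B (Fin.last n).castSucc)
      (Finset.univ.biUnion fun i : Fin (n + 1) => B i.castSucc) (B (Fin.last (n + 1)))
      (Finset.univ.biUnion B) where
  sup_eq := by
    ext x
    simp [Fin.exists_fin_succ']
  inf_eq := by
    ext x
    simp only [Finset.inf_eq_inter, Finset.mem_inter, Finset.mem_biUnion, Finset.mem_univ,
      true_and]
    constructor
    · rintro ⟨⟨i, hi⟩, hx⟩
      exact ⟨hx, hint i.castSucc _ (Fin.last (n + 1)) (Fin.castSucc_le_castSucc_iff.2 i.le_last)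
        (Fin.le_last _) (Finset.mem_inter.2 ⟨hi, hx⟩)⟩
    · rintro ⟨hx, hxn⟩
      exact ⟨⟨Fin.last n, hxn⟩, hx⟩

theorem seqDensity_succ_succ {n : ℕ} {B : Fin (n + 2) → Finset α}
    (hT : (Finset.univ.biUnion fun i : Fin (n + 1) => B i.castSucc) ⊆ Finset.univ.biUnion B)
    (μ : ∀ i, (↥(B i) → Bool) → ℝ) :
    seqDensity (n + 2) B μ = fun f =>
      seqDensity (n + 1) (fun i => B i.castSucc) (fun i => μ i.castSucc) (res hT f) *
        condDensity (Finset.inter_subset_left : _ ∩ B (Fin.last n).castSucc ⊆ _)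
          (μ (Fin.last (n + 1)))
          (res (Finset.subset_biUnion_of_mem B (Finset.mem_univ _)) f) := by
  funext f
  exact Fin.prod_univ_castSucc _

theorem marg_seqDensity_one (B : Fin 1 → Finset α) (μ : ∀ i, (↥(B i) → Bool) → ℝ) (i : Fin 1) :
    marg (Finset.subset_biUnion_of_mem B (Finset.mem_univ i)) (seqDensity 1 B μ) = μ i := by
  obtain rfl := Subsingleton.elim 0 i
  have hdensity : seqDensity 1 B μ = fun f =>
      μ 0 (res (Finset.subset_biUnion_of_mem B (Finset.mem_univ 0)) f) := by
    funext f
    exact Fin.prod_univ_one _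
  rw [hdensity]
  exact marg_comp_res_of_superset _ (by simp) _

theorem stmt7_general (ℓ : ℕ) (B : Fin ℓ → Finset α)
    (hint : ∀ i k j : Fin ℓ, i ≤ k → k ≤ j → B i ∩ B j ⊆ B k)
    (μ : ∀ i, (↥(B i) → Bool) → ℝ)
    (hμ : ∀ i j : Fin ℓ, (j : ℕ) + 1 = i →
      ∀ s, marg (Finset.inter_subset_left : B i ∩ B j ⊆ B i) (μ i) s ≠ 0)
    (hcons : ∀ i j : Fin ℓ, (j : ℕ) + 1 = i →
      marg (Finset.inter_subset_left : B i ∩ B j ⊆ B i) (μ i) =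
      marg (Finset.inter_subset_right : B i ∩ B j ⊆ B j) (μ j))
    (i : Fin ℓ) :
    marg (Finset.subset_biUnion_of_mem B (Finset.mem_univ i)) (seqDensity ℓ B μ) = μ i := by
  induction ℓ with
  | zero => exact i.elim0
  | succ ℓ ih =>
    obtain _ | n := ℓ
    · exact marg_seqDensity_one B μ i
    have ih := ih (fun i => B i.castSucc) (fun i k j => hint i.castSucc k.castSucc j.castSucc)
      (fun i => μ i.castSucc) (fun i j => hμ i.castSucc j.castSucc)
      (fun i j => hcons i.castSucc j.castSucc)
    have sq := bicartSq_biUnion_castSucc hint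
    have hμ_last := hμ (Fin.last (n + 1)) (Fin.last n).castSucc rfl
    rw [seqDensity_succ_succ sq.le₂₄]
    induction i using Fin.lastCases with
    | last =>
      refine marg_right_mul_condDensity sq hμ_last ?_
      rw [hcons _ _ rfl, ← ih (Fin.last n), marg_marg]
    | cast i =>
      have hi := Finset.subset_biUnion_of_mem (fun i : Fin (n + 1) => B i.castSucc)
        (Finset.mem_univ i)
      rw [← marg_marg hi sq.le₂₄, marg_left_mul_condDensity sq _ hμ_last, ih i]

end SequentialSampling

theorem stmt7 (ℓ : ℕ) (hℓ : 1 ≤ ℓ) (B : Fin ℓ → Finset V)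
    -- the bags are nonempty
    (hne : ∀ i, (B i).Nonempty)
    -- the interval property
    (hint : ∀ i k j : Fin ℓ, i ≤ k → k ≤ j → B i ∩ B j ⊆ B k)
    (μ : ∀ i, (↥(B i) → Bool) → ℝ)
    -- each μ i is a probability distribution assigning positive probability
    -- to every assignment
    (hpos : ∀ i g, 0 < μ i g)
    (hprob : ∀ i, ∑ g : ↥(B i) → Bool, μ i g = 1)
    -- consistency: the marginals of μ i and μ j on B i ∩ B j coincide
    (hcons : ∀ i j : Fin ℓ,
      marg (Finset.inter_subset_left : B i ∩ B j ⊆ B i) (μ i) =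
      marg (Finset.inter_subset_right : B i ∩ B j ⊆ B j) (μ j)) :
    ∀ (i : Fin ℓ) (g : ↥(B i) → Bool),
      marg (Finset.subset_biUnion_of_mem B (Finset.mem_univ i)) (seqDensity ℓ B μ) g
        = μ i g := by
  intro i
  exact congrFun <| stmt7_general ℓ B hint μ (fun i _ _ s => (marg_pos _ (hpos i) s).ne')
    (fun i j _ => hcons i j) i
end

section
/- Under the layered chain setup, for every real ρ > 0, the total weight of all edges with A-gap at least ρ is bounded by the total potential drop: the sum of w(u, v) over all 0 ≤ i ≤ ℓ−1 and all pairs u ∈ S_i, v ∈ S_{i+1} with Pr[X_i = u] > 0, Pr[X_{i+1} = v] > 0, and |A(u) − A(v)| ≥ ρ, is at most (φ(0) − φ(ℓ)) / ρ². -/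
/-!
STATEMENT 11: Under the layered chain setup, for every real ρ > 0, the total weight of
all edges with A-gap at least ρ is bounded by the total potential drop:
Σ w(u,v) over all 0 ≤ i ≤ ℓ−1 and pairs u ∈ S_i, v ∈ S_{i+1} with Pr[X_i = u] > 0,
Pr[X_{i+1} = v] > 0, and |A(u) − A(v)| ≥ ρ, is at most (φ(0) − φ(ℓ)) / ρ².
-/

open Classical in
/-- Probability of the event `A` under the finitely-supported distribution `p`. -/
noncomputable def prE {Ω : Type*} [Fintype Ω] (p : Ω → ℝ) (A : Ω → Prop) : ℝ :=
  ∑ ω, if A ω then p ω else 0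

/-- Expectation of `f` under the finitely-supported distribution `p`. -/
noncomputable def expE {Ω : Type*} [Fintype Ω] (p : Ω → ℝ) (f : Ω → ℝ) : ℝ :=
  ∑ ω, p ω * f ω

/-- Variance of `f` under the finitely-supported distribution `p`. -/
noncomputable def varE {Ω : Type*} [Fintype Ω] (p : Ω → ℝ) (f : Ω → ℝ) : ℝ :=
  expE p fun ω => (f ω - expE p f) ^ 2

/-- Conditional probability `Pr[A | B]` under `p`. -/
noncomputable def cprE {Ω : Type*} [Fintype Ω] (p : Ω → ℝ) (A B : Ω → Prop) : ℝ :=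
  prE p (fun ω => A ω ∧ B ω) / prE p B

/-- `Aval p A0 Xi v = Pr[A0 | Xi = v] − 1/2`. -/
noncomputable def Aval {Ω σ : Type*} [Fintype Ω] (p : Ω → ℝ) (A0 : Ω → Prop)
    (Xi : Ω → σ) (v : σ) : ℝ :=
  cprE p A0 (fun ω => Xi ω = v) - 1 / 2

/-!
Write `A_i` for the random variable `A(X_i)`, a constant shift of the conditional probability of an
event `E` given `X_i`. Conditional independence makes `A_{i+1}` the conditional expectation of `A_i`
given `X_{i+1}`, so `A_i - A_{i+1}` is orthogonal to every function of `X_{i+1}`, and Pythagoras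
gives `φ(i) - φ(i + 1) = 𝔼[(A_i - A_{i+1})²]`. By Chebyshev's inequality the edges of layer `i`
with gap at least `ρ` have total weight at most `(φ(i) - φ(i + 1)) / ρ²`, and the sum over `i`
telescopes.
-/

section Weights

variable {Ω σ τ : Type*} [Fintype Ω] {p : Ω → ℝ}

lemma prE_nonneg (hp : ∀ ω, 0 ≤ p ω) (A : Ω → Prop) : 0 ≤ prE p A :=
  Finset.sum_nonneg fun ω _ => by split_ifs <;> simp [hp ω]

lemma prE_mono (hp : ∀ ω, 0 ≤ p ω) {A B : Ω → Prop} (hAB : ∀ ω, A ω → B ω) :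
    prE p A ≤ prE p B :=
  Finset.sum_le_sum fun ω _ => by
    split_ifs with hA hB hB
    exacts [le_rfl, absurd (hAB ω hA) hB, hp ω, le_rfl]

lemma prE_eq_zero_of_imp (hp : ∀ ω, 0 ≤ p ω) {A B : Ω → Prop} (hAB : ∀ ω, A ω → B ω)
    (hB : prE p B = 0) : prE p A = 0 :=
  le_antisymm (hB ▸ prE_mono hp hAB) (prE_nonneg hp A)

open Classical in
lemma sum_prE_and_eq_mul (A : Ω → Prop) {Z : Ω → σ} {s : Finset σ} (hZ : ∀ ω, Z ω ∈ s)
    (g : σ → ℝ) :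
    ∑ z ∈ s, prE p (fun ω => A ω ∧ Z ω = z) * g z
      = expE p (fun ω => if A ω then g (Z ω) else 0) := by
  simp only [prE, expE, Finset.sum_mul]
  rw [Finset.sum_comm]
  refine Finset.sum_congr rfl fun ω _ => ?_
  by_cases hA : A ω <;> simp [hA, hZ ω]

lemma sum_prE_eq_mul {Z : Ω → σ} {s : Finset σ} (hZ : ∀ ω, Z ω ∈ s) (g : σ → ℝ) :
    ∑ z ∈ s, prE p (fun ω => Z ω = z) * g z = expE p (fun ω => g (Z ω)) := by
  simpa using sum_prE_and_eq_mul (p := p) (fun _ => True) hZ g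

lemma sum_ite_prE_eq_and_eq [Fintype σ] [Fintype τ] (X : Ω → σ) (Y : Ω → τ)
    (C : σ → τ → Prop) [∀ u v, Decidable (C u v)] :
    ∑ u, ∑ v, (if C u v then prE p (fun ω => X ω = u ∧ Y ω = v) else 0)
      = expE p (fun ω => if C (X ω) (Y ω) then 1 else 0) := by
  rw [← sum_prE_eq_mul (Z := fun ω => (X ω, Y ω)) (fun _ => Finset.mem_univ _)
      (fun z => if C z.1 z.2 then 1 else 0),
    Fintype.sum_prod_type]
  simp only [Prod.mk.injEq, mul_ite, mul_one, mul_zero]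

lemma expE_mono (hp : ∀ ω, 0 ≤ p ω) {f g : Ω → ℝ} (hfg : ∀ ω, f ω ≤ g ω) :
    expE p f ≤ expE p g :=
  Finset.sum_le_sum fun ω _ => mul_le_mul_of_nonneg_left (hfg ω) (hp ω)

lemma expE_div_const (f : Ω → ℝ) (c : ℝ) : expE p (fun ω => f ω / c) = expE p f / c := by
  simp only [expE, Finset.sum_div, mul_div_assoc]

lemma expE_sub (f g : Ω → ℝ) : expE p (fun ω => f ω - g ω) = expE p f - expE p g := by
  simp only [expE, mul_sub, Finset.sum_sub_distrib]

lemma expE_ite_le_expE_sq_div_sq (hp : ∀ ω, 0 ≤ p ω) {ρ : ℝ} (hρ : 0 < ρ) {A : Ω → Prop}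
    [DecidablePred A] {f : Ω → ℝ} (hA : ∀ ω, A ω → ρ ≤ |f ω|) :
    expE p (fun ω => if A ω then 1 else 0) ≤ expE p (fun ω => f ω ^ 2) / ρ ^ 2 := by
  rw [← expE_div_const]
  refine expE_mono hp fun ω => ?_
  split_ifs with hω
  · rw [one_le_div (by positivity), ← sq_abs (f ω)]
    exact pow_le_pow_left₀ hρ.le (hA ω hω) 2
  · positivity

lemma varE_sub_varE_eq_expE_sq_sub {f g : Ω → ℝ} (hmean : expE p f = expE p g)
    (horth : expE p (fun ω => (f ω - g ω) * g ω) = 0) :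
    varE p f - varE p g = expE p (fun ω => (f ω - g ω) ^ 2) := by
  have hdiff : expE p (fun ω => f ω - g ω) = 0 := by rw [expE_sub, hmean, sub_self]
  rw [varE, varE, hmean]
  generalize expE p g = m
  calc expE p (fun ω => (f ω - m) ^ 2) - expE p (fun ω => (g ω - m) ^ 2)
      = expE p (fun ω => (f ω - g ω) ^ 2) + 2 * expE p (fun ω => (f ω - g ω) * g ω)
          - 2 * m * expE p (fun ω => f ω - g ω) := by
        simp only [expE, Finset.mul_sum, ← Finset.sum_sub_distrib, ← Finset.sum_add_distrib]
        exact Finset.sum_congr rfl fun ω _ => by ring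
    _ = expE p (fun ω => (f ω - g ω) ^ 2) := by rw [horth, hdiff]; ring

end Weights

/-- Conditional independence of the event `E` and the random variable `Y` given the random variable
`X`, with the conditional probabilities multiplied out so that null values of `X` impose nothing. -/
def EventCondIndep {Ω σ τ : Type*} [Fintype Ω] (p : Ω → ℝ) (E : Ω → Prop) (Y : Ω → τ)
    (X : Ω → σ) : Prop :=
  ∀ (b : τ) (c : σ),
    prE p (fun ω => E ω ∧ Y ω = b ∧ X ω = c) * prE p (fun ω => X ω = c)
      = prE p (fun ω => E ω ∧ X ω = c) * prE p (fun ω => Y ω = b ∧ X ω = c)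

namespace EventCondIndep

variable {Ω σ τ : Type*} [Fintype Ω] {p : Ω → ℝ} {E : Ω → Prop} {X : Ω → σ} {Y : Ω → τ}

lemma self (p : Ω → ℝ) (E : Ω → Prop) (X : Ω → σ) : EventCondIndep p E X X := by
  intro b c
  by_cases hbc : b = c
  · simp only [hbc, and_self]
  · have hne (ω : Ω) : ¬(X ω = b ∧ X ω = c) := fun h => hbc (h.1.symm.trans h.2)
    simp [prE, hne]

lemma prE_and_eq_cprE_mul (h : EventCondIndep p E Y X) (hp : ∀ ω, 0 ≤ p ω) (b : τ) (c : σ) :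
    prE p (fun ω => E ω ∧ Y ω = b ∧ X ω = c)
      = cprE p E (fun ω => X ω = c) * prE p (fun ω => Y ω = b ∧ X ω = c) := by
  by_cases hc : prE p (fun ω => X ω = c) = 0
  · rw [prE_eq_zero_of_imp hp (fun _ hω => hω.2.2) hc, prE_eq_zero_of_imp hp (fun _ hω => hω.2) hc,
      mul_zero]
  · rw [cprE, div_mul_eq_mul_div, eq_div_iff hc, h b c]

open Classical in
lemma expE_cprE_mul (h : EventCondIndep p E Y X) (hp : ∀ ω, 0 ≤ p ω) (g : τ → ℝ) :
    expE p (fun ω => cprE p E (fun ω' => X ω' = X ω) * g (Y ω))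
      = expE p (fun ω => if E ω then g (Y ω) else 0) := by
  have hmem (ω : Ω) : (Y ω, X ω) ∈ Finset.univ.image (fun ω => (Y ω, X ω)) :=
    Finset.mem_image_of_mem _ (Finset.mem_univ ω)
  rw [← sum_prE_and_eq_mul E hmem (fun z => g z.1),
    ← sum_prE_eq_mul hmem (fun z => cprE p E (fun ω' => X ω' = z.2) * g z.1)]
  refine Finset.sum_congr rfl fun ⟨b, c⟩ _ => ?_
  simp only [Prod.mk.injEq]
  rw [h.prE_and_eq_cprE_mul hp]
  ring

lemma expE_Aval_sub_Aval_mul (h : EventCondIndep p E Y X) (hp : ∀ ω, 0 ≤ p ω) (g : τ → ℝ) :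
    expE p (fun ω => (Aval p E X (X ω) - Aval p E Y (Y ω)) * g (Y ω)) = 0 := by
  simp only [Aval, sub_sub_sub_cancel_right, sub_mul, expE_sub]
  rw [h.expE_cprE_mul hp, (EventCondIndep.self p E Y).expE_cprE_mul hp, sub_self]

lemma varE_Aval_sub_varE_Aval (h : EventCondIndep p E Y X) (hp : ∀ ω, 0 ≤ p ω) :
    varE p (fun ω => Aval p E X (X ω)) - varE p (fun ω => Aval p E Y (Y ω))
      = expE p (fun ω => (Aval p E X (X ω) - Aval p E Y (Y ω)) ^ 2) := by
  refine varE_sub_varE_eq_expE_sq_sub ?_ (h.expE_Aval_sub_Aval_mul hp (Aval p E Y))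
  rw [← sub_eq_zero, ← expE_sub]
  simpa only [mul_one] using h.expE_Aval_sub_Aval_mul hp (fun _ => 1)

open Classical in
lemma sum_edge_weight_le [Fintype σ] [Fintype τ] (h : EventCondIndep p E Y X)
    (hp : ∀ ω, 0 ≤ p ω) {ρ : ℝ} (hρ : 0 < ρ) :
    ∑ u : σ, ∑ v : τ,
        (if 0 < prE p (fun ω => X ω = u) ∧ 0 < prE p (fun ω => Y ω = v) ∧
            ρ ≤ |Aval p E X u - Aval p E Y v| then
          prE p (fun ω => X ω = u ∧ Y ω = v)
        else 0)
      ≤ (varE p (fun ω => Aval p E X (X ω)) - varE p (fun ω => Aval p E Y (Y ω))) / ρ ^ 2 := by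
  rw [h.varE_Aval_sub_varE_Aval hp, sum_ite_prE_eq_and_eq X Y
    (fun u v => 0 < prE p (fun ω => X ω = u) ∧ 0 < prE p (fun ω => Y ω = v) ∧
      ρ ≤ |Aval p E X u - Aval p E Y v|)]
  exact expE_ite_le_expE_sq_div_sq hp hρ fun ω hω => hω.2.2

end EventCondIndep

open Classical in
theorem stmt11_general {Ω : Type*} [Fintype Ω] (ℓ : ℕ) (S : ℕ → Type*) [∀ i, Fintype (S i)]
    (p : Ω → ℝ) (hp : ∀ ω, 0 ≤ p ω) (X : ∀ i, Ω → S i) (E : Ω → Prop)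
    (hci : ∀ i < ℓ, EventCondIndep p E (X (i + 1)) (X i)) (ρ : ℝ) (hρ : 0 < ρ) :
    ∑ i ∈ Finset.range ℓ, ∑ u : S i, ∑ v : S (i + 1),
        (if 0 < prE p (fun ω => X i ω = u) ∧ 0 < prE p (fun ω => X (i + 1) ω = v) ∧
            ρ ≤ |Aval p E (X i) u - Aval p E (X (i + 1)) v| then
          prE p (fun ω => X i ω = u ∧ X (i + 1) ω = v)
        else 0)
      ≤ (varE p (fun ω => Aval p E (X 0) (X 0 ω))
          - varE p (fun ω => Aval p E (X ℓ) (X ℓ ω))) / ρ ^ 2 := by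
  rw [← Finset.sum_range_sub' (fun i => varE p (fun ω => Aval p E (X i) (X i ω))) ℓ,
    Finset.sum_div]
  exact Finset.sum_le_sum fun i hi =>
    (hci i (Finset.mem_range.1 hi)).sum_edge_weight_le hp hρ

open Classical in
theorem stmt11 {Ω : Type*} [Fintype Ω] (ℓ : ℕ) (hℓ : 1 ≤ ℓ)
    (S : ℕ → Type*) [∀ i, Fintype (S i)]
    -- a finite probability space
    (p : Ω → ℝ) (hp : ∀ ω, 0 ≤ p ω) (hsum : ∑ ω, p ω = 1)
    (X : ∀ i, Ω → S i)
    -- X_0 and X_{i+1} are conditionally independent given X_i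
    (hci : ∀ i < ℓ, ∀ (a : S 0) (b : S (i + 1)) (c : S i),
      prE p (fun ω => X 0 ω = a ∧ X (i + 1) ω = b ∧ X i ω = c)
          * prE p (fun ω => X i ω = c)
        = prE p (fun ω => X 0 ω = a ∧ X i ω = c)
          * prE p (fun ω => X (i + 1) ω = b ∧ X i ω = c))
    (s0 s1 : S 0) (hs : s0 ≠ s1) (hX0 : ∀ ω, X 0 ω = s0 ∨ X 0 ω = s1)
    (h0 : prE p (fun ω => X 0 ω = s0) = 1 / 2)
    (h1 : prE p (fun ω => X 0 ω = s1) = 1 / 2)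
    (ρ : ℝ) (hρ : 0 < ρ) :
    ∑ i ∈ Finset.range ℓ, ∑ u : S i, ∑ v : S (i + 1),
        (if 0 < prE p (fun ω => X i ω = u) ∧ 0 < prE p (fun ω => X (i + 1) ω = v) ∧
            ρ ≤ |Aval p (fun ω' => X 0 ω' = s0) (X i) u
                  - Aval p (fun ω' => X 0 ω' = s0) (X (i + 1)) v| then
          prE p (fun ω => X i ω = u ∧ X (i + 1) ω = v)
        else 0)
      ≤ (varE p (fun ω => Aval p (fun ω' => X 0 ω' = s0) (X 0) (X 0 ω))
          - varE p (fun ω => Aval p (fun ω' => X 0 ω' = s0) (X ℓ) (X ℓ ω))) / ρ ^ 2 := by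
  exact stmt11_general ℓ S p hp X (fun ω => X 0 ω = s0) (fun i hi => hci i hi s0) ρ hρ
end
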